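/- arXiv:2310.04137 — 10 statements merged into one kernel-verified Lean document; each statement's English description precedes it below -/
import Mathlib

section
/- Let p_1 < p_2 < ... < p_n be distinct Pythagorean primes and N = p_1 p_2 ⋯ p_n. Then the Paley-type graph Γ_N is Hamiltonian, and in particular connected. -/
/-!
Since `1 = 1 ^ 2` is a quadratic residue among the units, consecutive residues are adjacent in
`paleyType M`, so for `M ≥ 3` the walk `0, 1, …, M - 1, 0` around `ZMod M` is a Hamiltonian cycle:
it is the image of the standard cycle of `cycleGraph M` (`paleyType_isHamiltonianCycle`). A product
of at least one prime congruent to `1` modulo `4` is at least `5`.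
-/

/-- `QRset M` is the set of quadratic residues among the units of `ZMod M`:
units that are squares of units. -/
def QRset (M : ℕ) : Set (ZMod M) := {u | ∃ x : ZMod M, IsUnit x ∧ x ^ 2 = u}

/-- For a prime `q`, `QRp q` is the set of nonzero quadratic residues mod `q`. -/
def QRp (q : ℕ) : Set (ZMod q) := {z | z ≠ 0 ∧ IsSquare z}

/-- The Paley-type graph on `ZMod M`: `a` and `b` are adjacent iff `a - b ∈ QRset M`
(symmetrized; when `-1 ∈ QRset M` this relation is already symmetric). -/
def paleyType (M : ℕ) : SimpleGraph (ZMod M) :=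
  SimpleGraph.fromRel (fun a b => a - b ∈ QRset M)

open SimpleGraph in
/-- `ZMod (k + 3)` is by definition `Fin (k + 3)`, so the cycle graph embeds as a spanning
subgraph by the identity map. -/
theorem cycleGraph_le_paleyType (k : ℕ) : cycleGraph (k + 3) ≤ paleyType (k + 3) := by
  intro a b hab
  refine (SimpleGraph.fromRel_adj _ _ _).2 ⟨hab.ne, ?_⟩
  rcases cycleGraph_adj.1 hab with h | h
  · exact Or.inl ⟨1, isUnit_one, (one_pow 2).trans h.symm⟩
  · exact Or.inr ⟨1, isUnit_one, (one_pow 2).trans h.symm⟩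

open SimpleGraph in
theorem paleyType_isHamiltonianCycle (k : ℕ) :
    ∃ a, ∃ c : (paleyType (k + 3)).Walk a a, c.IsHamiltonianCycle := by
  have h : (cycleGraph.cycle k).IsHamiltonianCycle :=
    Walk.isHamiltonianCycle_iff_isCycle_and_length_eq.2
      ⟨cycleGraph.isCycle_cycle, by simp⟩
  exact ⟨_, _, h.map (f := Hom.ofLE (cycleGraph_le_paleyType k)) Function.bijective_id⟩

theorem stmt_5 (n : ℕ) (hn : 0 < n) (p : Fin n → ℕ) (hp : ∀ i, (p i).Prime)
    (h4 : ∀ i, p i % 4 = 1) (hmono : StrictMono p)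
    (N : ℕ) (hN : N = ∏ i, p i) :
    (∃ a, ∃ c : (paleyType N).Walk a a, c.IsHamiltonianCycle) ∧
      (paleyType N).Connected := by
  have h3 : 3 ≤ N := by
    have h0 : p ⟨0, hn⟩ ∣ N := hN ▸ Finset.dvd_prod_of_mem p (Finset.mem_univ _)
    have hpos : 0 < N := hN ▸ Finset.prod_pos fun i _ => (hp i).pos
    have := Nat.le_of_dvd hpos h0
    have := (hp ⟨0, hn⟩).two_le
    have := h4 ⟨0, hn⟩
    omega
  obtain ⟨k, rfl⟩ := Nat.exists_eq_add_of_le' h3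
  exact ⟨paleyType_isHamiltonianCycle k,
    SimpleGraph.cycleGraph_connected.mono (cycleGraph_le_paleyType k)⟩
end

section
/- Let p_1 < p_2 < ... < p_n be distinct Pythagorean primes and N = p_1 p_2 ⋯ p_n. Then the Paley-type graph Γ_N is Eulerian: it admits a closed trail (Eulerian circuit) that uses every edge exactly once. -/
namespace SimpleGraph

variable {V : Type*} {G : SimpleGraph V}

/-- A trail that cannot be extended at its starting vertex is closed, when degrees are even. -/
lemma eq_of_isTrail_of_forall_mem_edges [Fintype V] [DecidableEq V] [DecidableRel G.Adj]
    {u v : V} {w : G.Walk u v} (hw : w.IsTrail) (hdeg : Even (G.degree u))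
    (hmax : ∀ x, G.Adj u x → s(u, x) ∈ w.edges) : u = v := by
  have hcount : w.edges.countP (fun e => u ∈ e) = G.degree u := by
    rw [← card_incidenceFinset_eq_degree, List.countP_eq_length_filter,
      ← List.toFinset_card_of_nodup (hw.edges_nodup.filter _)]
    congr 1
    ext e
    simp only [List.mem_toFinset, List.mem_filter, decide_eq_true_eq, mem_incidenceFinset]
    constructor
    · rintro ⟨h1, h2⟩
      exact ⟨w.edges_subset_edgeSet h1, h2⟩
    · rintro ⟨h1, h2⟩
      obtain ⟨x, rfl⟩ := h2
      exact ⟨hmax x h1, Sym2.mem_mk_left _ _⟩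
  rw [← hcount, hw.even_countP_edges_iff] at hdeg
  by_contra h
  exact (hdeg h).1 rfl

/-- Euler's theorem: a finite connected graph with at least one edge and only even degrees has an
Eulerian circuit. -/
theorem exists_isCircuit_isEulerian [Fintype V] [DecidableEq V] [DecidableRel G.Adj]
    (hconn : G.Connected) (hdeg : ∀ v, Even (G.degree v)) {a b : V} (hab : G.Adj a b) :
    ∃ v, ∃ w : G.Walk v v, w.IsCircuit ∧ w.IsEulerian := by
  have : Nonempty V := ⟨a⟩
  obtain ⟨u, v, w, hw, hmax⟩ := Walk.exists_isTrail_forall_isTrail_length_le_length G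
  -- No trail as long as `w` can be extended at its starting vertex.
  have hext : ∀ {x y : V} (c : G.Walk x y), c.IsTrail → c.length = w.length →
      ∀ z, G.Adj x z → s(x, z) ∈ c.edges := by
    intro x y c hc hlen z hz
    by_contra hn
    have h1 : (Walk.cons hz.symm c).IsTrail := by
      rw [Walk.isTrail_cons]
      exact ⟨hc, by rwa [Sym2.eq_swap]⟩
    have h2 := hmax _ _ _ h1
    simp only [Walk.length_cons] at h2
    omega
  obtain rfl := eq_of_isTrail_of_forall_mem_edges hw (hdeg u) (hext w hw rfl)
  have hloc : ∀ x ∈ w.support, ∀ z, G.Adj x z → s(x, z) ∈ w.edges := by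
    intro x hx z hz
    have := hext (w.rotate x hx) (hw.rotate hx) (by simp) z hz
    rwa [(w.rotate_edges x hx).mem_iff] at this
  have hsupp : ∀ x, x ∈ w.support := by
    intro x
    by_contra hx
    obtain ⟨q⟩ := hconn.preconnected u x
    obtain ⟨d, -, h1, h2⟩ := q.exists_boundary_dart {y | y ∈ w.support} w.start_mem_support hx
    exact h2 (w.snd_mem_support_of_mem_edges (hloc _ h1 _ d.adj))
  have hall : ∀ e, e ∈ G.edgeSet → e ∈ w.edges := by
    intro e
    induction e with
    | _ x y => exact fun h => hloc x (hsupp x) y h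
  refine ⟨u, w, ⟨hw, ?_⟩, Walk.isEulerian_iff _ |>.2 ⟨hw, hall⟩⟩
  rintro rfl
  simpa using hall s(a, b) hab

end SimpleGraph

lemma paleyType_adj_add_one {N : ℕ} [Fact (1 < N)] (a : ZMod N) :
    (paleyType N).Adj a (a + 1) := by
  rw [paleyType, SimpleGraph.fromRel_adj]
  exact ⟨by simp, Or.inr ⟨1, isUnit_one, by ring⟩⟩

lemma paleyType_connected {N : ℕ} [Fact (1 < N)] : (paleyType N).Connected := by
  have : NeZero N := ⟨by have := Fact.out (p := 1 < N); omega⟩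
  have h0 : ∀ k : ℕ, (paleyType N).Reachable 0 (k : ZMod N) := by
    intro k
    induction k with
    | zero => simp
    | succ k ih =>
      rw [Nat.cast_succ]
      exact ih.trans (paleyType_adj_add_one _).reachable
  have h1 : ∀ x : ZMod N, (paleyType N).Reachable 0 x := fun x => by
    simpa using h0 x.val
  exact ⟨fun x y => (h1 x).symm.trans (h1 y)⟩

lemma paleyType_even_degree {N : ℕ} [NeZero N] (hodd : Odd N)
    [DecidableRel (paleyType N).Adj] (a : ZMod N) : Even ((paleyType N).degree a) := by
  have h2 : IsUnit (2 : ZMod N) := by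
    have := (ZMod.isUnit_iff_coprime 2 N).2 hodd.coprime_two_left
    exact_mod_cast this
  rw [← SimpleGraph.card_neighborFinset_eq_degree, ← ZMod.natCast_eq_zero_iff_even,
    Finset.card_eq_sum_ones, Nat.cast_sum]
  -- The degree mod 2 is computed by pairing each neighbour `b` with its reflection `2a - b`.
  refine Finset.sum_involution (fun b _ => 2 * a - b) ?_ ?_ ?_ ?_
  · intro b _
    decide
  · intro b hb _ h
    rw [SimpleGraph.mem_neighborFinset] at hb
    refine hb.ne (h2.mul_left_cancel ?_)
    linear_combination h
  · intro b hb
    rw [SimpleGraph.mem_neighborFinset, paleyType, SimpleGraph.fromRel_adj] at hb ⊢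
    obtain ⟨hne, h⟩ := hb
    refine ⟨fun h => hne (by linear_combination -h), ?_⟩
    rw [show a - (2 * a - b) = b - a by ring, show 2 * a - b - a = a - b by ring]
    exact h.symm
  · intro b _
    ring

theorem stmt_7 (n : ℕ) (hn : 0 < n) (p : Fin n → ℕ) (hp : ∀ i, (p i).Prime)
    (h4 : ∀ i, p i % 4 = 1) (hmono : StrictMono p)
    (N : ℕ) (hN : N = ∏ i, p i) :
    ∃ v, ∃ w : (paleyType N).Walk v v, w.IsCircuit ∧ w.IsEulerian := by
  classical
  have hodd : Odd N := by
    rw [hN]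
    refine Finset.prod_induction _ Odd (fun _ _ => Odd.mul) odd_one fun i _ => ?_
    rw [Nat.odd_iff]
    have := h4 i
    omega
  have hlt : 1 < N := by
    have hdvd : p ⟨0, hn⟩ ∣ N := hN ▸ Finset.dvd_prod_of_mem p (Finset.mem_univ _)
    exact (hp _).one_lt.trans_le (Nat.le_of_dvd hodd.pos hdvd)
  have : Fact (1 < N) := ⟨hlt⟩
  have : NeZero N := ⟨by omega⟩
  exact SimpleGraph.exists_isCircuit_isEulerian paleyType_connected
    (paleyType_even_degree hodd) (paleyType_adj_add_one 0)
end

section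
/- Let p_1 < p_2 < ... < p_n be distinct Pythagorean primes and N = p_1 p_2 ⋯ p_n. Then the Paley-type graph Γ_N is edge-transitive: for any two edges {a,b} and {c,d} of Γ_N there exists a graph automorphism of Γ_N mapping the edge {a,b} to the edge {c,d}. -/
theorem sq_unit_mul_mem_QRset_iff {M : ℕ} (v : (ZMod M)ˣ) (z : ZMod M) :
    (v : ZMod M) ^ 2 * z ∈ QRset M ↔ z ∈ QRset M := by
  constructor
  · rintro ⟨x, hx, h⟩
    refine ⟨(v⁻¹ : (ZMod M)ˣ) * x, (Units.isUnit _).mul hx, ?_⟩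
    rw [mul_pow, h, ← mul_assoc, ← mul_pow, Units.inv_mul, one_pow, one_mul]
  · rintro ⟨x, hx, rfl⟩
    exact ⟨v * x, v.isUnit.mul hx, mul_pow _ _ _⟩

/-- The automorphism `t ↦ v ^ 2 * (t - b) + d` of the Paley-type graph. -/
def paleyAffine {M : ℕ} (v : (ZMod M)ˣ) (b d : ZMod M) : paleyType M ≃g paleyType M where
  toEquiv := ((Equiv.subRight b).trans (v ^ 2).mulLeft).trans (Equiv.addRight d)
  map_rel_iff' := by
    intro s t
    have key : ∀ s t : ZMod M, ((v : ZMod M) ^ 2 * (s - b) + d) - ((v : ZMod M) ^ 2 * (t - b) + d)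
        = (v : ZMod M) ^ 2 * (s - t) := fun s t => by ring
    simp only [paleyType, SimpleGraph.fromRel_adj, (Equiv.injective _).ne_iff]
    simp [key, sq_unit_mul_mem_QRset_iff]

theorem paleyAffine_apply {M : ℕ} (v : (ZMod M)ˣ) (b d t : ZMod M) :
    paleyAffine v b d t = (v : ZMod M) ^ 2 * (t - b) + d := by
  simp [paleyAffine]

/-- Transitivity on pairs oriented so that the difference is a quadratic residue. -/
theorem exists_iso_of_sub_mem_QRset {M : ℕ} {a b c d : ZMod M} (hab : a - b ∈ QRset M)
    (hcd : c - d ∈ QRset M) : ∃ φ : paleyType M ≃g paleyType M, φ a = c ∧ φ b = d := by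
  obtain ⟨_, ⟨x, rfl⟩, hx⟩ := hab
  obtain ⟨_, ⟨y, rfl⟩, hy⟩ := hcd
  refine ⟨paleyAffine (y * x⁻¹) b d, ?_, ?_⟩
  · rw [paleyAffine_apply, ← hx, ← mul_pow, Units.val_mul, mul_assoc, Units.inv_mul, mul_one, hy,
      sub_add_cancel]
  · rw [paleyAffine_apply, sub_self, mul_zero, zero_add]

theorem stmt_9 (n : ℕ) (hn : 0 < n) (p : Fin n → ℕ) (hp : ∀ i, (p i).Prime)
    (h4 : ∀ i, p i % 4 = 1) (hmono : StrictMono p)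
    (N : ℕ) (hN : N = ∏ i, p i) (a b c d : ZMod N)
    (hab : (paleyType N).Adj a b) (hcd : (paleyType N).Adj c d) :
    ∃ φ : paleyType N ≃g paleyType N, s(φ a, φ b) = s(c, d) := by
  rw [paleyType, SimpleGraph.fromRel_adj] at hab hcd
  rcases hab.2 with h | h <;> rcases hcd.2 with h' | h' <;>
    obtain ⟨φ, h1, h2⟩ := exists_iso_of_sub_mem_QRset h h' <;>
    exact ⟨φ, by simp [h1, h2, Sym2.eq_swap]⟩
end

section
/- Let p_1 < p_2 < ... < p_n be distinct Pythagorean primes and N = p_1 p_2 ⋯ p_n, and let k = φ(N)/2ⁿ. Then the vertex connectivity of the Paley-type graph Γ_N equals k; in particular, for every set S of vertices with |S| < k, the subgraph of Γ_N induced on the complement of S is connected (and nonempty). -/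
open scoped Pointwise

/-- Chowla's theorem, by induction on `B` through the Dyson transform: for `e ∈ A`, the pair
`A ∪ (e + B)`, `B ∩ (A - e)` has the same total cardinality, and its sumset lies in `A + B`. -/
theorem chowla_add {N : ℕ} [NeZero N] (B : Finset (ZMod N)) (h0 : 0 ∈ B)
    (hB : ∀ b ∈ B, b ≠ 0 → IsUnit b) (A : Finset (ZMod N)) (hA : A.Nonempty) :
    A + B = Finset.univ ∨ A.card + B.card ≤ (A + B).card + 1 := by
  induction B using Finset.strongInduction generalizing A with
  | H B ih =>
  by_cases hsub : A + B ⊆ A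
  · by_cases hb : ∃ b ∈ B, b ≠ 0
    · -- `A` is stable under adding the generator `b`, so it is everything.
      left
      obtain ⟨b, hbB, hb0⟩ := hb
      obtain ⟨a, ha⟩ := hA
      have key : ∀ m : ℕ, a + m * b ∈ A := by
        intro m
        induction m with
        | zero => simpa using ha
        | succ m ihm =>
          have := hsub (Finset.add_mem_add ihm hbB)
          convert this using 1
          push_cast
          ring
      obtain ⟨u, rfl⟩ := hB b hbB hb0
      refine Finset.eq_univ_of_forall fun x => ?_
      have hx := key ((x - a) * (↑u⁻¹ : ZMod N)).val
      rw [ZMod.natCast_zmod_val, mul_assoc, Units.inv_mul, mul_one, add_sub_cancel] at hx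
      simpa using Finset.add_mem_add hx h0
    · right
      push Not at hb
      have hB0 : B = {0} := Finset.eq_singleton_iff_unique_mem.mpr ⟨h0, hb⟩
      simp [hB0]
  · obtain ⟨x, hx, hxA⟩ := Finset.not_subset.mp hsub
    obtain ⟨e, he, b, hb, rfl⟩ := Finset.mem_add.mp hx
    set B' := B.filter (fun c => e + c ∈ A) with hB'
    set D := B.filter (fun c => ¬ e + c ∈ A) with hD
    set A' := A ∪ D.image (fun c => e + c) with hA'
    have hss : B' ⊂ B := Finset.filter_ssubset.mpr ⟨b, hb, hxA⟩
    have hcB : B'.card + D.card = B.card := Finset.card_filter_add_card_filter_not _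
    have hcA : A'.card = A.card + D.card := by
      rw [hA', Finset.card_union_of_disjoint,
        Finset.card_image_of_injective _ (add_right_injective e)]
      rw [Finset.disjoint_right]
      intro y hy
      obtain ⟨c, hc, rfl⟩ := Finset.mem_image.mp hy
      exact (Finset.mem_filter.mp hc).2
    have hincl : A' + B' ⊆ A + B := by
      intro y hy
      obtain ⟨s, hs, t, ht, rfl⟩ := Finset.mem_add.mp hy
      obtain ⟨htB, htA⟩ := Finset.mem_filter.mp ht
      rcases Finset.mem_union.mp hs with hs | hs
      · exact Finset.add_mem_add hs htB
      · obtain ⟨c, hc, rfl⟩ := Finset.mem_image.mp hs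
        rw [add_right_comm]
        exact Finset.add_mem_add htA (Finset.mem_filter.mp hc).1
    rcases ih B' hss (by simp [hB', h0, he])
        (fun c hc => hB c (Finset.mem_filter.mp hc).1) A'
        (hA.mono Finset.subset_union_left) with h | h
    · left
      exact Finset.univ_subset_iff.mp (h ▸ hincl)
    · right
      have := Finset.card_le_card hincl
      omega

theorem coprime_pairwise {n : ℕ} {p : Fin n → ℕ} (hp : ∀ i, (p i).Prime) (hmono : StrictMono p) :
    Pairwise (Function.onFun Nat.Coprime p) := fun i j hij =>
  (Nat.coprime_primes (hp i) (hp j)).mpr (hmono.injective.ne hij)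

theorem neg_one_mem_QRset {n : ℕ} {p : Fin n → ℕ} (hp : ∀ i, (p i).Prime)
    (h4 : ∀ i, p i % 4 = 1) (hmono : StrictMono p) : (-1 : ZMod (∏ i, p i)) ∈ QRset (∏ i, p i) := by
  have hsq : ∀ i, ∃ y : ZMod (p i), y ^ 2 = -1 := by
    intro i
    have := Fact.mk (hp i)
    have h : IsSquare (-1 : ZMod (p i)) :=
      ZMod.exists_sq_eq_neg_one_iff.mpr (by have := h4 i; omega)
    obtain ⟨y, hy⟩ := h
    exact ⟨y, by rw [hy, sq]⟩
  choose y hy using hsq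
  let e := ZMod.prodEquivPi p (coprime_pairwise hp hmono)
  have h : (e.symm y) ^ 2 = -1 := by
    apply e.injective
    rw [map_pow, RingEquiv.apply_symm_apply, map_neg, map_one]
    funext i
    exact hy i
  refine ⟨e.symm y, ?_, h⟩
  rw [← isUnit_pow_iff (two_ne_zero), h]
  exact isUnit_one.neg

theorem ncard_QRset_mul {n : ℕ} {p : Fin n → ℕ} (hp : ∀ i, (p i).Prime)
    (h4 : ∀ i, p i % 4 = 1) (hmono : StrictMono p) :
    (QRset (∏ i, p i)).ncard * 2 ^ n = (∏ i, p i).totient := by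
  classical
  have hfact := fun i => Fact.mk (hp i)
  have hne : NeZero (∏ i, p i) := ⟨Finset.prod_ne_zero_iff.mpr fun i _ => (hp i).ne_zero⟩
  let e := ZMod.prodEquivPi p (coprime_pairwise hp hmono)
  let f : (ZMod (∏ i, p i))ˣ →* (ZMod (∏ i, p i))ˣ := powMonoidHom 2
  have hrange : (QRset (∏ i, p i)).ncard = Nat.card f.range := by
    have himg : QRset (∏ i, p i) = Units.val '' (f.range : Set (ZMod (∏ i, p i))ˣ) := by
      ext z
      constructor
      · rintro ⟨x, ⟨u, rfl⟩, rfl⟩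
        exact ⟨u ^ 2, ⟨u, rfl⟩, by simp⟩
      · rintro ⟨_, ⟨u, rfl⟩, rfl⟩
        exact ⟨u, u.isUnit, by simp [f]⟩
    rw [himg, Set.ncard_image_of_injective _ Units.val_injective]
    rfl
  have hker : Nat.card f.ker = 2 ^ n := by
    let T : Finset (∀ i, ZMod (p i)) := Fintype.piFinset fun i => {1, -1}
    have hT : T.card = 2 ^ n := by
      have hpm : ∀ i, ({1, -1} : Finset (ZMod (p i))).card = 2 := by
        intro i
        have : Fact (2 < p i) := ⟨by
          have := h4 i
          have := (hp i).two_le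
          omega⟩
        exact Finset.card_pair (ZMod.neg_one_ne_one).symm
      simp [T, Fintype.card_piFinset, hpm]
    have hmem : ∀ x : ∀ i, ZMod (p i), x ∈ T ↔ x ^ 2 = 1 := by
      intro x
      simp only [T, Fintype.mem_piFinset, Finset.mem_insert, Finset.mem_singleton, funext_iff,
        Pi.pow_apply, Pi.one_apply, sq_eq_one_iff]
    have himg : (fun u : (ZMod (∏ i, p i))ˣ => e u) '' (f.ker : Set (ZMod (∏ i, p i))ˣ) = T := by
      ext x
      rw [Finset.mem_coe, hmem]
      constructor
      · rintro ⟨u, hu, rfl⟩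
        have hu' : u ^ 2 = 1 := hu
        have : (u : ZMod (∏ i, p i)) ^ 2 = 1 := by
          rw [← Units.val_pow_eq_pow_val, hu', Units.val_one]
        simp only [← map_pow, this, map_one]
      · intro hx
        have h1 : (e.symm x) ^ 2 = 1 := by rw [← map_pow, hx, map_one]
        refine ⟨Units.ofPowEqOne _ 2 h1 two_ne_zero, ?_, ?_⟩
        · exact Units.pow_ofPowEqOne h1 two_ne_zero
        · simp
    rw [← hT, ← Set.ncard_coe_finset T, ← himg,
      Set.ncard_image_of_injective _ (fun _ _ h => Units.val_injective (e.injective h))]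
    rfl
  rw [hrange, ← hker, ← Subgroup.index_ker, mul_comm, Subgroup.card_mul_index,
    Nat.card_eq_fintype_card, ZMod.card_units_eq_totient]

/-- Deleting fewer than `|QRset N|` vertices leaves a connected graph, for any modulus `N ≠ 0`. -/
theorem connected_of_ncard_lt {N : ℕ} [NeZero N] (S : Set (ZMod N))
    (hS : S.ncard < (QRset N).ncard) : ((paleyType N).induce Sᶜ).Connected := by
  classical
  have hSne : ∃ v, v ∉ S := by
    by_contra! h
    have : (QRset N).ncard ≤ S.ncard := Set.ncard_le_ncard (fun x _ => h x)
    omega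
  obtain ⟨v, hv⟩ := hSne
  rw [SimpleGraph.connected_iff_exists_forall_reachable]
  refine ⟨⟨v, hv⟩, ?_⟩
  rcases subsingleton_or_nontrivial (ZMod N) with hsub | hnt
  · intro w
    rw [Subsingleton.elim w ⟨v, hv⟩]
  let A : Finset (ZMod N) := Finset.univ.filter
    fun w => ∃ hw : w ∉ S, ((paleyType N).induce Sᶜ).Reachable ⟨v, hv⟩ ⟨w, hw⟩
  have hvA : v ∈ A := by simpa [A] using hv
  let B : Finset (ZMod N) := insert 0 (QRset N).toFinset
  have hunit : ∀ b ∈ QRset N, IsUnit b := by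
    rintro _ ⟨x, hx, rfl⟩
    exact hx.pow 2
  have hBcard : B.card = (QRset N).ncard + 1 := by
    rw [Finset.card_insert_of_notMem, Set.ncard_eq_toFinset_card']
    intro h0
    exact not_isUnit_zero (hunit 0 (by simpa using h0))
  have hincl : A + B ⊆ A ∪ S.toFinset := by
    intro y hy
    obtain ⟨a, ha, b, hb, rfl⟩ := Finset.mem_add.mp hy
    by_cases hS' : a + b ∈ S
    · simp [hS']
    rcases Finset.mem_insert.mp hb with rfl | hb
    · simp [ha]
    have hbQ : b ∈ QRset N := by simpa using hb
    obtain ⟨-, haS, hr⟩ := Finset.mem_filter.mp ha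
    refine Finset.mem_union_left _ (Finset.mem_filter.mpr ⟨Finset.mem_univ _, hS', hr.trans ?_⟩)
    apply SimpleGraph.Adj.reachable
    change (paleyType N).Adj a (a + b)
    rw [paleyType, SimpleGraph.fromRel_adj]
    refine ⟨?_, Or.inr (by simpa using hbQ)⟩
    intro h
    exact (hunit b hbQ).ne_zero (by simpa using h)
  rcases chowla_add B (by simp [B]) (by
      intro b hb hb0
      exact hunit b (by simpa [B, hb0] using hb)) A ⟨v, hvA⟩ with h | h
  · rintro ⟨w, hw⟩
    have hwm : w ∈ A ∪ S.toFinset := hincl (h ▸ Finset.mem_univ w)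
    rcases Finset.mem_union.mp hwm with hwA | hwS
    · exact (Finset.mem_filter.mp hwA).2.2
    · exact absurd (Set.mem_toFinset.mp hwS) hw
  · have h1 := (Finset.card_le_card hincl).trans (Finset.card_union_le _ _)
    rw [← Set.ncard_eq_toFinset_card'] at h1
    omega

theorem stmt_10 (n : ℕ) (hn : 0 < n) (p : Fin n → ℕ) (hp : ∀ i, (p i).Prime)
    (h4 : ∀ i, p i % 4 = 1) (hmono : StrictMono p)
    (N : ℕ) (hN : N = ∏ i, p i) (k : ℕ) (hk : k = N.totient / 2 ^ n) :
    (∀ S : Set (ZMod N), S.ncard < k →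
        ((paleyType N).induce Sᶜ).Connected) ∧
      (∃ S : Set (ZMod N), S.ncard = k ∧ ¬ ((paleyType N).induce Sᶜ).Connected) := by
  have hcard : (QRset N).ncard * 2 ^ n = N.totient := by
    rw [hN]
    exact ncard_QRset_mul hp h4 hmono
  have hneg : (-1 : ZMod N) ∈ QRset N := by
    rw [hN]
    exact neg_one_mem_QRset hp h4 hmono
  have hne : NeZero N := ⟨by
    rw [hN]
    exact Finset.prod_ne_zero_iff.mpr fun i _ => (hp i).ne_zero⟩
  have hkQ : (QRset N).ncard = k := by
    rw [hk, ← hcard, Nat.mul_div_cancel _ (by positivity)]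
  have hN5 : 5 ≤ N := by
    have h5 : 5 ≤ p ⟨0, hn⟩ := by
      have := h4 ⟨0, hn⟩
      have := (hp ⟨0, hn⟩).two_le
      omega
    refine h5.trans (Nat.le_of_dvd (Nat.pos_of_ne_zero hne.out) ?_)
    rw [hN]
    exact Finset.dvd_prod_of_mem p (Finset.mem_univ _)
  have hnt : Fact (1 < N) := ⟨by omega⟩
  refine ⟨fun S hS => connected_of_ncard_lt S (by omega), QRset N, hkQ, fun hconn => ?_⟩
  have h0 : (0 : ZMod N) ∉ QRset N := by
    rintro ⟨x, hx, hx0⟩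
    exact not_isUnit_zero (hx0 ▸ hx.pow 2)
  -- `2 * k ≤ φ(N) < N` and `5 ≤ N` give `k + 1 < N`, so some vertex other than `0` is not deleted.
  have hw : ∃ w, w ∉ insert (0 : ZMod N) (QRset N) := by
    by_contra! hall
    have huniv : insert (0 : ZMod N) (QRset N) = Set.univ := Set.eq_univ_of_forall hall
    have h1 := Set.ncard_insert_of_notMem h0
    rw [huniv, Set.ncard_univ, Nat.card_zmod] at h1
    have h2 : 2 ^ 1 ≤ 2 ^ n := Nat.pow_le_pow_right (by norm_num) hn
    have h3 := Nat.mul_le_mul_left (QRset N).ncard h2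
    have h5 := Nat.totient_lt N hnt.out
    omega
  obtain ⟨w, hw⟩ := hw
  rw [Set.mem_insert_iff, not_or] at hw
  have : Nontrivial ↥(QRset N)ᶜ := ⟨⟨w, hw.2⟩, ⟨0, h0⟩, fun h => hw.1 (congrArg Subtype.val h)⟩
  obtain ⟨⟨z, hz⟩, hadj⟩ := hconn.preconnected.exists_adj_of_nontrivial ⟨0, h0⟩
  have hadj' : (paleyType N).Adj 0 z := hadj
  rw [paleyType, SimpleGraph.fromRel_adj] at hadj'
  rcases hadj'.2 with h | h
  · obtain ⟨x, hx, hxz⟩ := h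
    obtain ⟨y, hy, hy1⟩ := hneg
    exact hz ⟨x * y, hx.mul hy, by rw [mul_pow, hxz, hy1]; ring⟩
  · exact hz (by simpa using h)
end

section
/- Let p_1 < p_2 < ... < p_n be distinct Pythagorean primes and N = p_1 p_2 ⋯ p_n. If z ∈ QR_N, then the number of ordered pairs (a, b) with a, b ∈ QR_N and a − b = z equals (1/4ⁿ)·∏_{j=1}^{n}(p_j − 5). -/
/-- The elements `a` such that both `a` and `a - z` are unit squares modulo `M`: the first
coordinates of the pairs of quadratic residues with difference `z`. -/
def residuesWithDiff (M : ℕ) (z : ZMod M) : Set (ZMod M) :=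
  {a | a ∈ QRset M ∧ a - z ∈ QRset M}

theorem mem_QRset_prime {q : ℕ} [Fact q.Prime] (u : ZMod q) :
    u ∈ QRset q ↔ quadraticChar (ZMod q) u = 1 := by
  constructor
  · rintro ⟨x, hx, rfl⟩
    exact quadraticChar_sq_one' hx.ne_zero
  · intro h
    have hu : u ≠ 0 := by
      rintro rfl
      simp at h
    obtain ⟨x, rfl⟩ := (quadraticChar_one_iff_isSquare hu).1 h
    refine ⟨x, ?_, by ring⟩
    rw [isUnit_iff_ne_zero]
    rintro rfl
    simp at hu

/-- The count for `z = 1`, as a combination of Jacobi sums. -/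
theorem four_mul_card_squares {q : ℕ} [Fact q.Prime] (h4 : q % 4 = 1) :
    4 * ((Finset.univ.filter fun x : ZMod q =>
      quadraticChar (ZMod q) x = 1 ∧ quadraticChar (ZMod q) (1 - x) = 1).card : ℤ) = q - 5 := by
  classical
  set χ := quadraticChar (ZMod q) with hχ
  have hchar : ringChar (ZMod q) ≠ 2 := by
    rw [ZMod.ringChar_zmod_n]
    omega
  have hne : χ ≠ 1 := quadraticChar_ne_one hchar
  have hneg : χ (-1) = 1 := by
    rw [hχ, quadraticChar_one_iff_isSquare (by simp), FiniteField.isSquare_neg_one_iff,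
      ZMod.card]
    omega
  have hinv : χ⁻¹ = χ := (quadraticChar_isQuadratic (ZMod q)).inv
  have h11 : jacobiSum (1 : MulChar (ZMod q) ℤ) 1 = q - 2 := by
    rw [jacobiSum_one_one, ZMod.card]
  have h1χ : jacobiSum 1 χ = -1 := jacobiSum_one_nontrivial hne
  have hχ1 : jacobiSum χ 1 = -1 := by rw [jacobiSum_comm, h1χ]
  have hχχ : jacobiSum χ χ = -1 := by
    have := jacobiSum_nontrivial_inv hne
    rwa [hinv, hneg] at this
  have key : 4 * ((Finset.univ.filter fun x : ZMod q => χ x = 1 ∧ χ (1 - x) = 1).card : ℤ)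
      = jacobiSum (1 : MulChar (ZMod q) ℤ) 1 + jacobiSum 1 χ + jacobiSum χ 1
        + jacobiSum χ χ := by
    simp only [jacobiSum, ← Finset.sum_add_distrib]
    rw [Finset.card_filter, Nat.cast_sum, Finset.mul_sum]
    refine Finset.sum_congr rfl fun x _ => ?_
    have val (y : ZMod q) : ((1 : MulChar (ZMod q) ℤ) y = 0 ∧ χ y = 0) ∨
        ((1 : MulChar (ZMod q) ℤ) y = 1 ∧ (χ y = 1 ∨ χ y = -1)) := by
      by_cases hy : y = 0
      · left
        exact ⟨MulChar.map_nonunit _ (by simp [hy]), MulChar.map_nonunit _ (by simp [hy])⟩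
      · right
        exact ⟨MulChar.one_apply (isUnit_iff_ne_zero.2 hy), quadraticChar_dichotomy hy⟩
    rcases val x with ⟨h, h'⟩ | ⟨h, h' | h'⟩ <;>
    rcases val (1 - x) with ⟨k, k'⟩ | ⟨k, k' | k'⟩ <;> simp [h, h', k, k']
  rw [key, h11, h1χ, hχ1, hχχ]
  ring

theorem four_mul_ncard_residues {q : ℕ} (hq : q.Prime) (h4 : q % 4 = 1) (z : ZMod q)
    (hz : z ∈ QRset q) : 4 * (residuesWithDiff q z).ncard = q - 5 := by
  have : Fact q.Prime := ⟨hq⟩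
  have hz' := (mem_QRset_prime z).1 hz
  have hz0 : z ≠ 0 := by
    rintro rfl
    simp at hz'
  have hneg : quadraticChar (ZMod q) (-1) = 1 := by
    rw [quadraticChar_one_iff_isSquare (by simp), FiniteField.isSquare_neg_one_iff, ZMod.card]
    omega
  have himg : residuesWithDiff q z = (fun x => z * x) '' (Finset.univ.filter fun x : ZMod q =>
      quadraticChar (ZMod q) x = 1 ∧ quadraticChar (ZMod q) (1 - x) = 1 : Finset (ZMod q)) := by
    have hmem (x : ZMod q) : z * x ∈ residuesWithDiff q z ↔
        quadraticChar (ZMod q) x = 1 ∧ quadraticChar (ZMod q) (1 - x) = 1 := by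
      have : z * x - z = z * (-1 * (1 - x)) := by ring
      simp only [residuesWithDiff, Set.mem_ofPred_eq, mem_QRset_prime, this, map_mul, hz', hneg,
        one_mul]
    ext a
    constructor
    · intro ha
      have hxa : z * (z⁻¹ * a) = a := mul_inv_cancel_left₀ hz0 a
      refine ⟨z⁻¹ * a, ?_, hxa⟩
      simpa using (hmem (z⁻¹ * a)).1 (by rwa [hxa])
    · rintro ⟨x, hx, rfl⟩
      exact (hmem x).2 (by simpa using hx)
  rw [himg, Set.ncard_image_of_injective _ (mul_right_injective₀ hz0), Set.ncard_coe_finset]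
  have := four_mul_card_squares (q := q) h4
  omega

theorem mem_QRset_iff {n : ℕ} {p : Fin n → ℕ} (e : ZMod (∏ i, p i) ≃+* ∀ i, ZMod (p i))
    (u : ZMod (∏ i, p i)) : u ∈ QRset (∏ i, p i) ↔ ∀ i, e u i ∈ QRset (p i) := by
  constructor
  · rintro ⟨x, hx, rfl⟩ i
    exact ⟨e x i, Pi.isUnit_iff.1 (hx.map e) i, by simp⟩
  · intro h
    choose x hx hxu using h
    refine ⟨e.symm x, (Pi.isUnit_iff.2 hx).map e.symm, ?_⟩
    rw [← map_pow, RingEquiv.symm_apply_eq]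
    exact funext hxu

theorem ncard_residues_prod {n : ℕ} {p : Fin n → ℕ} (e : ZMod (∏ i, p i) ≃+* ∀ i, ZMod (p i))
    (z : ZMod (∏ i, p i)) :
    (residuesWithDiff (∏ i, p i) z).ncard = ∏ i, (residuesWithDiff (p i) (e z i)).ncard := by
  have himg : e '' residuesWithDiff (∏ i, p i) z =
      Set.univ.pi fun i => residuesWithDiff (p i) (e z i) := by
    have hmem (a : ZMod (∏ i, p i)) : a ∈ residuesWithDiff (∏ i, p i) z ↔
        ∀ i, e a i ∈ residuesWithDiff (p i) (e z i) := by
      simp only [residuesWithDiff, Set.mem_ofPred_eq, mem_QRset_iff e, map_sub, Pi.sub_apply,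
        forall_and]
    ext b
    obtain ⟨a, rfl⟩ := e.surjective b
    rw [e.injective.mem_set_image, hmem]
    simp
  rw [← Set.ncard_image_of_injective _ e.injective, himg, ← Nat.card_coe_set_eq,
    Nat.card_congr (Equiv.Set.univPi _), Nat.card_pi]
  simp only [Nat.card_coe_set_eq]

theorem stmt_11 (n : ℕ) (hn : 0 < n) (p : Fin n → ℕ) (hp : ∀ i, (p i).Prime)
    (h4 : ∀ i, p i % 4 = 1) (hmono : StrictMono p)
    (N : ℕ) (hN : N = ∏ i, p i) (z : ZMod N) (hz : z ∈ QRset N) :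
    {ab : ZMod N × ZMod N | ab.1 ∈ QRset N ∧ ab.2 ∈ QRset N ∧ ab.1 - ab.2 = z}.ncard
      = (∏ i, (p i - 5)) / 4 ^ n := by
  subst hN
  have hpairs : {ab : ZMod (∏ i, p i) × ZMod (∏ i, p i) | ab.1 ∈ QRset (∏ i, p i) ∧
      ab.2 ∈ QRset (∏ i, p i) ∧ ab.1 - ab.2 = z} =
      (fun a => (a, a - z)) '' residuesWithDiff (∏ i, p i) z := by
    ext ⟨a, b⟩
    simp only [residuesWithDiff, Set.mem_ofPred_eq, Set.mem_image, Prod.mk.injEq]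
    constructor
    · rintro ⟨ha, hb, rfl⟩
      exact ⟨a, ⟨ha, by simpa using hb⟩, rfl, by ring⟩
    · rintro ⟨_, ⟨ha, hb⟩, rfl, rfl⟩
      exact ⟨ha, hb, by ring⟩
  let e := ZMod.prodEquivPi p fun i j hij =>
    (Nat.coprime_primes (hp i) (hp j)).2 (hmono.injective.ne hij)
  have hprod : ∏ i, (p i - 5) = 4 ^ n * ∏ i, (residuesWithDiff (p i) (e z i)).ncard := by
    rw [Finset.prod_congr rfl fun i _ => (four_mul_ncard_residues (hp i) (h4 i) (e z i)
      ((mem_QRset_iff e z).1 hz i)).symm, Finset.prod_mul_distrib]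
    simp
  rw [hpairs, Set.ncard_image_of_injective _ fun a b h => (Prod.mk.inj h).1,
    ncard_residues_prod e z, hprod, Nat.mul_div_cancel_left _ (by positivity)]
end

section
/- Let p_1 < p_2 < ... < p_n be distinct Pythagorean primes and N = p_1 p_2 ⋯ p_n. Suppose z ∈ Z_N is nonzero, z ≡ 0 (mod p_j) for all j ≠ k, and the reduction of z modulo p_k is a nonzero quadratic residue modulo p_k. Then the number of ordered pairs (a, b) with a, b ∈ QR_N and a − b = z equals [∏_{j ≠ k}(p_j − 1)/2^{n−1}]·[(p_k − 5)/4]. -/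
section Local

variable {q : ℕ} [Fact q.Prime]

open Classical in
/-- Twice the indicator of the nonzero squares of `ZMod q` is `χ + χ²`. -/
lemma two_mul_indicator (a : ZMod q) :
    2 * (if a ∈ QRset q then (1 : ℤ) else 0) =
      quadraticChar (ZMod q) a + quadraticChar (ZMod q) a ^ 2 := by
  by_cases h0 : a = 0
  · subst h0
    have : (0 : ZMod q) ∉ QRset q := by
      rintro ⟨x, hx, h⟩
      exact hx.ne_zero (by simpa using h)
    simp [this]
  by_cases hs : IsSquare a
  · have : a ∈ QRset q := by
      obtain ⟨x, rfl⟩ := hs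
      exact ⟨x, isUnit_iff_ne_zero.2 (by rintro rfl; simp at h0), by ring⟩
    rw [if_pos this, (quadraticChar_one_iff_isSquare h0).2 hs]
    norm_num
  · have : a ∉ QRset q := by
      rintro ⟨x, hx, h⟩
      exact hs ⟨x, by rw [← h]; ring⟩
    rw [if_neg this, quadraticChar_neg_one_iff_not_isSquare.2 hs]
    norm_num

lemma quadraticChar_sq_eq (a : ZMod q) :
    quadraticChar (ZMod q) a ^ 2 = 1 - (if a = 0 then (1 : ℤ) else 0) := by
  by_cases h : a = 0
  · simp [h]
  · rw [quadraticChar_sq_one h, if_neg h, sub_zero]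

lemma ncard_QRset (hq : q ≠ 2) : (QRset q).ncard = (q - 1) / 2 := by
  classical
  have hc : ringChar (ZMod q) ≠ 2 := by rwa [ZMod.ringChar_zmod_n]
  have h1 : 2 * ((QRset q).ncard : ℤ) = q - 1 := by
    have : ((QRset q).ncard : ℤ) = ∑ a : ZMod q, if a ∈ QRset q then (1 : ℤ) else 0 := by
      rw [Set.ncard_eq_toFinset_card', Finset.sum_boole]
      congr 2
      ext; simp
    rw [this, Finset.mul_sum]
    simp_rw [two_mul_indicator, quadraticChar_sq_eq]
    rw [Finset.sum_add_distrib, quadraticChar_sum_zero hc]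
    simp [ZMod.card]
  omega

/-- The sum `∑ χ(a)χ(a - z)`; substituting `a = z t` turns it into a Jacobi sum. -/
lemma sum_quadraticChar_mul_sub (hq : q % 4 = 1) {z : ZMod q} (hz : z ≠ 0) :
    ∑ a : ZMod q, quadraticChar (ZMod q) a * quadraticChar (ZMod q) (a - z) = -1 := by
  have hq2 : q ≠ 2 := by rintro rfl; omega
  have hc : ringChar (ZMod q) ≠ 2 := by rwa [ZMod.ringChar_zmod_n]
  have hm : quadraticChar (ZMod q) (-1) = 1 := by
    rw [quadraticChar_one_iff_isSquare (neg_ne_zero.2 one_ne_zero)]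
    exact ZMod.exists_sq_eq_neg_one_iff.2 (by omega)
  have hJ := jacobiSum_nontrivial_inv (quadraticChar_ne_one hc)
  rw [(quadraticChar_isQuadratic (ZMod q)).inv, hm, jacobiSum] at hJ
  rw [← hJ, ← Equiv.sum_comp (Equiv.mulLeft₀ z hz)]
  refine Finset.sum_congr rfl fun t _ => ?_
  have e : z * t - z = z * (-1) * (1 - t) := by ring
  change quadraticChar (ZMod q) (z * t) * quadraticChar (ZMod q) (z * t - z) = _
  simp only [e, map_mul, hm]
  linear_combination (quadraticChar (ZMod q) t * quadraticChar (ZMod q) (1 - t)) *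
    quadraticChar_sq_one hz

lemma ncard_QRset_inter (hq : q % 4 = 1) {z : ZMod q} (hz : z ∈ QRp q) :
    {a : ZMod q | a ∈ QRset q ∧ a - z ∈ QRset q}.ncard = (q - 5) / 4 := by
  classical
  obtain ⟨hz0, hzs⟩ := hz
  have hq2 : q ≠ 2 := by rintro rfl; omega
  have hc : ringChar (ZMod q) ≠ 2 := by rwa [ZMod.ringChar_zmod_n]
  have hm : quadraticChar (ZMod q) (-1) = 1 := by
    rw [quadraticChar_one_iff_isSquare (neg_ne_zero.2 one_ne_zero)]
    exact ZMod.exists_sq_eq_neg_one_iff.2 (by omega)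
  have hχz : quadraticChar (ZMod q) z = 1 := (quadraticChar_one_iff_isSquare hz0).2 hzs
  have hχnz : quadraticChar (ZMod q) (-z) = 1 := by
    rw [neg_eq_neg_one_mul, map_mul, hm, hχz, one_mul]
  have hsum := quadraticChar_sum_zero hc
  have hsum' : ∑ a : ZMod q, quadraticChar (ZMod q) (a - z) = 0 := by
    rw [← hsum]
    exact (Equiv.subRight z).sum_comp (fun a => quadraticChar (ZMod q) a)
  have h1 : 4 * (({a : ZMod q | a ∈ QRset q ∧ a - z ∈ QRset q}.ncard : ℕ) : ℤ) = q - 5 := by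
    have : (({a : ZMod q | a ∈ QRset q ∧ a - z ∈ QRset q}.ncard : ℕ) : ℤ) =
        ∑ a : ZMod q, (if a ∈ QRset q then (1 : ℤ) else 0) *
          (if a - z ∈ QRset q then (1 : ℤ) else 0) := by
      simp_rw [ite_zero_mul_ite_zero, mul_one]
      rw [Set.ncard_eq_toFinset_card', Finset.sum_boole]
      congr 2
      ext; simp
    rw [this, Finset.mul_sum]
    -- The four sums of the expansion, with `χ²` replaced by `1 - [· = 0]`.
    have hpt : ∀ a : ZMod q, 4 * ((if a ∈ QRset q then (1 : ℤ) else 0) *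
          (if a - z ∈ QRset q then (1 : ℤ) else 0)) =
        quadraticChar (ZMod q) a * quadraticChar (ZMod q) (a - z)
        + quadraticChar (ZMod q) (a - z) - (if a = 0 then 1 else 0)
        + quadraticChar (ZMod q) a - (if a = z then 1 else 0)
        + 1 - (if a = 0 then 1 else 0) - (if a = z then 1 else 0) := by
      intro a
      have e1 := two_mul_indicator a
      have e2 := two_mul_indicator (a - z)
      rw [quadraticChar_sq_eq] at e1 e2
      rw [show ∀ x y : ℤ, 4 * (x * y) = (2 * x) * (2 * y) by intros; ring, e1, e2]
      simp only [sub_eq_zero]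
      by_cases ha : a = 0
      · subst ha
        simp [hχnz, hz0.symm]
      by_cases hb : a = z
      · subst hb
        simp [hχz, hz0]
      simp only [if_neg ha, if_neg hb]
      ring
    simp_rw [hpt]
    simp only [Finset.sum_add_distrib, Finset.sum_sub_distrib, hsum, hsum',
      sum_quadraticChar_mul_sub hq hz0]
    simp [ZMod.card]
    ring
  omega

end Local

/-- Under the Chinese remainder isomorphism, `QRset` is the product of the local `QRset`s. -/
lemma mem_QRset_prod_iff {n : ℕ} {p : Fin n → ℕ}
    (e : ZMod (∏ i, p i) ≃+* ((i : Fin n) → ZMod (p i))) (u : ZMod (∏ i, p i)) :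
    u ∈ QRset (∏ i, p i) ↔ ∀ i, e u i ∈ QRset (p i) := by
  constructor
  · rintro ⟨x, hx, rfl⟩ i
    exact ⟨e x i, Pi.isUnit_iff.1 (hx.map e) i, by simp⟩
  · intro h
    choose x hx hxu using h
    refine ⟨e.symm x, (Pi.isUnit_iff.2 hx).map e.symm, e.injective ?_⟩
    ext i
    simp [hxu]

theorem stmt_13 (n : ℕ) (hn : 0 < n) (p : Fin n → ℕ) (hp : ∀ i, (p i).Prime)
    (h4 : ∀ i, p i % 4 = 1) (hmono : StrictMono p)
    (N : ℕ) (hN : N = ∏ i, p i) (z : ZMod N) (hz : z ≠ 0) (k : Fin n)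
    (hzero : ∀ j, j ≠ k → (z.val : ZMod (p j)) = 0)
    (hqr : (z.val : ZMod (p k)) ∈ QRp (p k)) :
    {ab : ZMod N × ZMod N | ab.1 ∈ QRset N ∧ ab.2 ∈ QRset N ∧ ab.1 - ab.2 = z}.ncard
      = ((∏ j ∈ ({k}ᶜ : Finset (Fin n)), (p j - 1)) / 2 ^ (n - 1)) * ((p k - 5) / 4) := by
  classical
  subst hN
  have : ∀ i, Fact (p i).Prime := fun i => ⟨hp i⟩
  have : NeZero (∏ i, p i) := ⟨Finset.prod_ne_zero_iff.2 fun i _ => (hp i).ne_zero⟩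
  have hcop : Pairwise (Function.onFun Nat.Coprime p) := fun i j hij =>
    (Nat.coprime_primes (hp i) (hp j)).2 (hmono.injective.ne hij)
  let e := ZMod.prodEquivPi p hcop
  have hez : ∀ i, e z i = (z.val : ZMod (p i)) := by
    intro i
    conv_lhs => rw [← ZMod.natCast_zmod_val z]
    rw [map_natCast, Pi.natCast_apply]
  let A : (i : Fin n) → Set (ZMod (p i)) :=
    fun i => {a | a ∈ QRset (p i) ∧ a - (z.val : ZMod (p i)) ∈ QRset (p i)}
  -- A pair `(a, b)` is determined by `a`, whose residues range over the product of the `A i`.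
  have himg : {ab : ZMod (∏ i, p i) × ZMod (∏ i, p i) | ab.1 ∈ QRset (∏ i, p i) ∧
      ab.2 ∈ QRset (∏ i, p i) ∧ ab.1 - ab.2 = z} =
      (fun f => (e.symm f, e.symm f - z)) '' (Set.univ.pi A) := by
    ext ⟨a, b⟩
    simp only [Set.mem_ofPred_eq, Set.mem_image, Set.mem_univ_pi, Prod.mk.injEq]
    constructor
    · rintro ⟨ha, hb, rfl⟩
      refine ⟨e a, fun i => ⟨(mem_QRset_prod_iff e a).1 ha i, ?_⟩, by simp, by simp⟩
      rw [← hez]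
      simpa using (mem_QRset_prod_iff e b).1 hb i
    · rintro ⟨f, hf, rfl, rfl⟩
      refine ⟨(mem_QRset_prod_iff e _).2 fun i => ?_, (mem_QRset_prod_iff e _).2 fun i => ?_,
        by simp⟩
      · simpa using (hf i).1
      · simpa [hez] using (hf i).2
  have hinj : Function.Injective
      (fun f : (i : Fin n) → ZMod (p i) => (e.symm f, e.symm f - z)) := fun f g h =>
    e.symm.injective (Prod.mk.inj h).1
  have hpi : (Set.univ.pi A).ncard = ∏ i, (A i).ncard := by
    rw [← Nat.card_coe_set_eq, Nat.card_congr (Equiv.Set.univPi A), Nat.card_pi]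
    rfl
  have hk : (A k).ncard = (p k - 5) / 4 := ncard_QRset_inter (h4 k) hqr
  have hj : ∀ j ∈ ({k}ᶜ : Finset (Fin n)), (A j).ncard = (p j - 1) / 2 := by
    intro j hj
    have hAj : A j = QRset (p j) := by
      ext a
      change _ ∧ _ ↔ _
      rw [hzero j (by simpa using hj), sub_zero, and_self]
    rw [hAj, ncard_QRset]
    intro h
    have := h4 j
    omega
  rw [himg, Set.ncard_image_of_injective _ hinj, hpi, ← Finset.prod_compl_mul_prod {k},
    Finset.prod_singleton, hk, Finset.prod_congr rfl hj]
  congr 1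
  -- Each `p j - 1` is even, so the quotient of the products is the product of the quotients.
  have hcard : (2 : ℕ) ^ (n - 1) = ∏ _j ∈ ({k}ᶜ : Finset (Fin n)), 2 := by
    rw [Finset.prod_const, Finset.card_compl, Finset.card_singleton, Fintype.card_fin]
  symm
  apply Nat.div_eq_of_eq_mul_left (by positivity)
  rw [hcard, ← Finset.prod_mul_distrib]
  refine Finset.prod_congr rfl fun j _ => ?_
  have := h4 j
  omega
end

section
/- Let p_1 < p_2 < ... < p_n be distinct Pythagorean primes and N = p_1 p_2 ⋯ p_n. Suppose z ∈ Z_N is nonzero, and there is a subset R ⊆ {1, ..., n} of size r with 1 ≤ r < n such that z ≡ 0 (mod p_j) for all j ∈ R and the reduction of z modulo p_j is a quadratic non-residue modulo p_j for all j ∉ R. Then the number of ordered pairs (a, b) with a, b ∈ QR_N and a − b = z equals ∏_{j=1}^{n}(p_j − 1) / (2^r · 4^{n−r}). -/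
lemma mem_QRset_iff_quadraticChar {q : ℕ} [Fact q.Prime] (a : ZMod q) :
    a ∈ QRset q ↔ quadraticChar (ZMod q) a = 1 := by
  constructor
  · rintro ⟨x, hx, rfl⟩
    exact quadraticChar_sq_one' hx.ne_zero
  · intro h
    have ha : a ≠ 0 := by
      rintro rfl
      simp at h
    obtain ⟨x, rfl⟩ := (quadraticChar_one_iff_isSquare ha).1 h
    exact ⟨x, isUnit_iff_ne_zero.2 (left_ne_zero_of_mul ha), by ring⟩

lemma ringChar_zmod_ne_two {q : ℕ} (h4 : q % 4 = 1) : ringChar (ZMod q) ≠ 2 := by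
  rw [ZMod.ringChar_zmod_n]
  omega

lemma quadraticChar_neg_one_of_mod_four {q : ℕ} [Fact q.Prime] (h4 : q % 4 = 1) :
    quadraticChar (ZMod q) (-1) = 1 := by
  rw [quadraticChar_one_iff_isSquare (neg_ne_zero.2 one_ne_zero), FiniteField.isSquare_neg_one_iff,
    ZMod.card]
  omega

lemma two_mul_ncard_QRset {q : ℕ} [Fact q.Prime] (h4 : q % 4 = 1) :
    2 * (QRset q).ncard = q - 1 := by
  classical
  have hset : QRset q = ((Finset.univ.filter fun a : ZMod q => quadraticChar (ZMod q) a = 1 :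
      Finset (ZMod q)) : Set (ZMod q)) := by
    ext a
    simp [mem_QRset_iff_quadraticChar]
  have hind : ∀ a : ZMod q, (2 * if quadraticChar (ZMod q) a = 1 then 1 else 0 : ℤ)
      = (1 : MulChar (ZMod q) ℤ) a + quadraticChar (ZMod q) a := by
    intro a
    by_cases ha : a = 0
    · subst ha
      rw [MulChar.map_zero, MulChar.map_zero]
      simp
    · rw [MulChar.one_apply (isUnit_iff_ne_zero.2 ha)]
      rcases quadraticChar_dichotomy ha with h | h <;> simp [h]
  have hq : 1 ≤ q := (Fact.out : q.Prime).one_le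
  rw [hset, Set.ncard_coe_finset]
  zify [hq]
  rw [Finset.card_filter]
  push_cast
  rw [Finset.mul_sum, Finset.sum_congr rfl fun a _ => hind a, Finset.sum_add_distrib,
    quadraticChar_sum_zero (ringChar_zmod_ne_two h4), MulChar.sum_one_eq_card_units,
    ZMod.card_units_eq_totient, Nat.totient_prime Fact.out]
  push_cast [hq]
  ring

lemma four_mul_ncard_local {q : ℕ} [Fact q.Prime] (h4 : q % 4 = 1) {c : ZMod q}
    (hc : ¬ IsSquare c) : 4 * {a : ZMod q | a ∈ QRset q ∧ a - c ∈ QRset q}.ncard = q - 1 := by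
  classical
  set χ := quadraticChar (ZMod q) with hχ
  have hF := ringChar_zmod_ne_two h4
  have hc0 : c ≠ 0 := by
    rintro rfl
    exact hc (IsSquare.zero)
  have hχc : χ c = -1 := quadraticChar_neg_one_iff_not_isSquare.2 hc
  have hχneg : χ (-1) = 1 := quadraticChar_neg_one_of_mod_four h4
  have hset : {a : ZMod q | a ∈ QRset q ∧ a - c ∈ QRset q} = (fun x => c * x) ''
      ((Finset.univ.filter fun x : ZMod q => χ x = -1 ∧ χ (1 - x) = -1 :
      Finset (ZMod q)) : Set (ZMod q)) := by
    ext a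
    have key : ∀ x : ZMod q, (c * x ∈ QRset q ∧ c * x - c ∈ QRset q) ↔
        χ x = -1 ∧ χ (1 - x) = -1 := by
      intro x
      have h1 : c * x - c = -1 * (c * (1 - x)) := by ring
      rw [mem_QRset_iff_quadraticChar, mem_QRset_iff_quadraticChar, h1, map_mul, map_mul, map_mul,
        ← hχ, hχc, hχneg]
      constructor <;> rintro ⟨h, h'⟩ <;> constructor <;> linarith
    constructor
    · intro h
      refine ⟨c⁻¹ * a, ?_, mul_inv_cancel_left₀ hc0 a⟩
      have := (key (c⁻¹ * a)).1 (by rwa [mul_inv_cancel_left₀ hc0 a])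
      simpa using this
    · rintro ⟨x, hx, rfl⟩
      exact (key x).2 (by simpa using hx)
  have hind : ∀ x : ZMod q, (4 * if χ x = -1 ∧ χ (1 - x) = -1 then 1 else 0 : ℤ)
      = ((1 : MulChar (ZMod q) ℤ) x - χ x) * ((1 : MulChar (ZMod q) ℤ) (1 - x) - χ (1 - x)) := by
    have hval : ∀ x : ZMod q, (1 : MulChar (ZMod q) ℤ) x - χ x = if χ x = -1 then 2 else 0 := by
      intro x
      by_cases hx : x = 0
      · subst hx
        rw [MulChar.map_zero, MulChar.map_zero]
        simp
      · rw [MulChar.one_apply (isUnit_iff_ne_zero.2 hx)]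
        rcases quadraticChar_dichotomy hx with h | h <;> rw [← hχ] at h <;> simp [h]
    intro x
    rw [hval, hval]
    split_ifs <;> simp_all
  have hne : χ ≠ 1 := quadraticChar_ne_one hF
  have hJ : jacobiSum χ χ = -1 := by
    have h := jacobiSum_nontrivial_inv hne
    rwa [(quadraticChar_isQuadratic (ZMod q)).inv, hχneg] at h
  have hq : 1 ≤ q := (Fact.out : q.Prime).one_le
  rw [hset, Set.ncard_image_of_injective _ (mul_right_injective₀ hc0), Set.ncard_coe_finset]
  zify [hq]
  rw [Finset.card_filter]
  push_cast
  rw [Finset.mul_sum, Finset.sum_congr rfl fun a _ => hind a]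
  have hexp : ∑ x : ZMod q, ((1 : MulChar (ZMod q) ℤ) x - χ x) *
      ((1 : MulChar (ZMod q) ℤ) (1 - x) - χ (1 - x)) =
      jacobiSum (1 : MulChar (ZMod q) ℤ) 1 - jacobiSum 1 χ - jacobiSum χ 1 + jacobiSum χ χ := by
    simp only [jacobiSum, ← Finset.sum_sub_distrib, ← Finset.sum_add_distrib]
    exact Finset.sum_congr rfl fun x _ => by ring
  rw [hexp, jacobiSum_comm χ 1, jacobiSum_one_one, jacobiSum_one_nontrivial hne, hJ, ZMod.card]
  ring

/-- Being the square of a unit is a componentwise condition under a ring isomorphism with a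
product. -/
lemma mem_QRset_iff_forall {ι : Type*} {N : ℕ} {p : ι → ℕ} (e : ZMod N ≃+* ∀ i, ZMod (p i))
    (u : ZMod N) : u ∈ QRset N ↔ ∀ i, e u i ∈ QRset (p i) := by
  constructor
  · rintro ⟨x, hx, rfl⟩ i
    exact ⟨e x i, Pi.isUnit_iff.1 (hx.map e) i, by simp⟩
  · intro h
    choose x hx hxu using h
    refine ⟨e.symm x, (Pi.isUnit_iff.2 hx).map e.symm, ?_⟩
    rw [← map_pow, RingEquiv.symm_apply_eq]
    exact funext hxu

lemma ncard_univ_pi {ι : Type*} [Fintype ι] {α : ι → Type*} (s : ∀ i, Set (α i)) :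
    (Set.univ.pi s).ncard = ∏ i, (s i).ncard := by
  simp only [← Nat.card_coe_set_eq]
  rw [Nat.card_congr (Equiv.Set.univPi s), Nat.card_pi]

theorem stmt_14 (n : ℕ) (hn : 0 < n) (p : Fin n → ℕ) (hp : ∀ i, (p i).Prime)
    (h4 : ∀ i, p i % 4 = 1) (hmono : StrictMono p)
    (N : ℕ) (hN : N = ∏ i, p i) (z : ZMod N) (hz : z ≠ 0)
    (R : Finset (Fin n)) (hR1 : 1 ≤ R.card) (hRn : R.card < n)
    (hzero : ∀ j ∈ R, (z.val : ZMod (p j)) = 0)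
    (hqnr : ∀ j ∉ R, (z.val : ZMod (p j)) ≠ 0 ∧ ¬ IsSquare (z.val : ZMod (p j))) :
    {ab : ZMod N × ZMod N | ab.1 ∈ QRset N ∧ ab.2 ∈ QRset N ∧ ab.1 - ab.2 = z}.ncard
      = (∏ i, (p i - 1)) / (2 ^ R.card * 4 ^ (n - R.card)) := by
  subst hN
  have : ∀ i, Fact (p i).Prime := fun i => ⟨hp i⟩
  have : NeZero (∏ i, p i) := ⟨Finset.prod_ne_zero_iff.2 fun i _ => (hp i).ne_zero⟩
  have hcop : Pairwise (Function.onFun Nat.Coprime p) := fun i j hij =>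
    (Nat.coprime_primes (hp i) (hp j)).2 (hmono.injective.ne hij)
  let e := ZMod.prodEquivPi p hcop
  have hez : ∀ i, e z i = (z.val : ZMod (p i)) := by
    intro i
    rw [ZMod.natCast_val]
    exact ZMod.prodEquivPi_apply p hcop z i
  let S : ∀ i, Set (ZMod (p i)) := fun i => {a | a ∈ QRset (p i) ∧ a - e z i ∈ QRset (p i)}
  have hpairs : {ab : ZMod (∏ i, p i) × ZMod (∏ i, p i) |
      ab.1 ∈ QRset (∏ i, p i) ∧ ab.2 ∈ QRset (∏ i, p i) ∧ ab.1 - ab.2 = z} =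
      (fun a : ∀ i, ZMod (p i) => (e.symm a, e.symm a - z)) '' Set.univ.pi S := by
    have hmem : ∀ a, (a ∈ QRset (∏ i, p i) ∧ a - z ∈ QRset (∏ i, p i)) ↔
        e a ∈ Set.univ.pi S := by
      intro a
      rw [mem_QRset_iff_forall e, mem_QRset_iff_forall e, ← forall_and]
      simp [S, Set.mem_pi]
    ext ⟨a, b⟩
    constructor
    · rintro ⟨ha, hb, rfl⟩
      exact ⟨e a, (hmem a).1 ⟨ha, by simpa using hb⟩, by simp⟩
    · rintro ⟨x, hx, hxab⟩
      obtain ⟨rfl, rfl⟩ := Prod.mk.inj hxab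
      obtain ⟨h1, h2⟩ := (hmem (e.symm x)).2 (by simpa using hx)
      exact ⟨h1, h2, by simp⟩
  have hinj : Function.Injective
      (fun a : ∀ i, ZMod (p i) => (e.symm a, e.symm a - z)) := fun a b h =>
    e.symm.injective (Prod.mk.inj h).1
  have hlocal : ∀ i, (if i ∈ R then 2 else 4) * (S i).ncard = p i - 1 := by
    intro i
    by_cases hi : i ∈ R
    · have : S i = QRset (p i) := by
        ext a
        simp only [S, hez, hzero i hi, sub_zero, and_self, Set.mem_ofPred_eq]
      rw [if_pos hi, this, two_mul_ncard_QRset (h4 i)]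
    · rw [if_neg hi]
      exact four_mul_ncard_local (h4 i) (by rw [hez]; exact (hqnr i hi).2)
  have hconst : ∏ i, (if i ∈ R then 2 else 4) = 2 ^ R.card * 4 ^ (n - R.card) := by
    rw [Finset.prod_ite]
    simp [Finset.filter_not, Finset.card_sdiff]
  rw [hpairs, Set.ncard_image_of_injective _ hinj, ncard_univ_pi,
    ← Finset.prod_congr rfl fun i _ => hlocal i, Finset.prod_mul_distrib, hconst,
    Nat.mul_div_cancel_left _ (by positivity)]
end

section
/- Let p_1 < p_2 < ... < p_n be distinct Pythagorean primes and N = p_1 p_2 ⋯ p_n. Then the Paley-type graph Γ_N is R-thin: for any vertices a, b ∈ Z_N, if the open neighborhoods of a and b in Γ_N are equal, then a = b. -/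
theorem paleyType_adj_translate {M : ℕ} {x y : ZMod M} (t : ZMod M)
    (h : (paleyType M).Adj x y) : (paleyType M).Adj (x + t) (y + t) := by
  simpa [paleyType, SimpleGraph.fromRel_adj] using h

theorem isUnit_of_paleyType_adj {M : ℕ} {a u : ZMod M}
    (h : (paleyType M).Adj a (a + u)) : IsUnit u := by
  rw [paleyType, SimpleGraph.fromRel_adj] at h
  rcases h.2 with ⟨x, hx, e⟩ | ⟨x, hx, e⟩
  · have e' : u = -x ^ 2 := by rw [e]; ring
    rw [e']
    exact (hx.pow 2).neg
  · have e' : u = x ^ 2 := by rw [e]; ring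
    rw [e']
    exact hx.pow 2

theorem stmt_17 (n : ℕ) (hn : 0 < n) (p : Fin n → ℕ) (hp : ∀ i, (p i).Prime)
    (h4 : ∀ i, p i % 4 = 1) (hmono : StrictMono p)
    (N : ℕ) (hN : N = ∏ i, p i) (a b : ZMod N)
    (h : (paleyType N).neighborSet a = (paleyType N).neighborSet b) :
    a = b := by
  by_contra hab
  have hN0 : N ≠ 0 := by
    rw [hN]
    exact Finset.prod_ne_zero_iff.2 fun i _ => (hp i).ne_zero
  have : NeZero N := ⟨hN0⟩
  have : Nontrivial (ZMod N) := ⟨a, b, hab⟩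
  have key : ∀ k : ℕ, (paleyType N).Adj a (a + (1 + k * (b - a))) := by
    intro k
    induction k with
    | zero =>
      rw [paleyType, SimpleGraph.fromRel_adj]
      exact ⟨by simp, Or.inr ⟨1, isUnit_one, by simp⟩⟩
    | succ k ih =>
      have h1 := paleyType_adj_translate (b - a) ih
      rw [add_sub_cancel] at h1
      have h2 : a + (1 + k * (b - a)) + (b - a) ∈ (paleyType N).neighborSet a := by
        rw [h]
        exact h1
      have e : a + (1 + ((k + 1 : ℕ) : ZMod N) * (b - a))
          = a + (1 + k * (b - a)) + (b - a) := by
        push_cast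
        ring
      rw [e]
      exact h2
  obtain ⟨i, hi⟩ : ∃ i, ¬ p i ∣ (b - a).val := by
    by_contra! hall
    have hdvd : N ∣ (b - a).val := by
      refine hN.dvd.trans ?_
      refine Fintype.prod_dvd_of_isRelPrime (fun i j hij => ?_) hall
      exact Nat.coprime_iff_isRelPrime.1
        ((Nat.coprime_primes (hp i) (hp j)).2 (hmono.injective.ne hij))
    rw [← ZMod.natCast_eq_zero_iff, ZMod.natCast_zmod_val, sub_eq_zero] at hdvd
    exact hab hdvd.symm
  have : Fact (p i).Prime := ⟨hp i⟩
  have hne : ((b - a).val : ZMod (p i)) ≠ 0 := by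
    rwa [Ne, ZMod.natCast_eq_zero_iff]
  -- `k` represents `-1 / d` modulo `p i`.
  set k : ℕ := (-((b - a).val : ZMod (p i))⁻¹).val with hk
  have hdiv : p i ∣ 1 + k * (b - a).val := by
    rw [← ZMod.natCast_eq_zero_iff]
    push_cast
    rw [hk, ZMod.natCast_zmod_val, neg_mul, inv_mul_cancel₀ hne, add_neg_cancel]
  have hu : IsUnit ((1 + k * (b - a).val : ℕ) : ZMod N) := by
    have := isUnit_of_paleyType_adj (key k)
    push_cast
    rwa [ZMod.natCast_zmod_val]
  rw [ZMod.isUnit_iff_coprime] at hu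
  have hpN : p i ∣ N := hN ▸ Finset.dvd_prod_of_mem p (Finset.mem_univ i)
  exact Nat.not_coprime_of_dvd_of_dvd (hp i).one_lt hdiv hpN hu
end

section
/- Let p_1 < p_2 < ... < p_n be distinct Pythagorean primes and N = p_1 p_2 ⋯ p_n. Then the automorphism group of the Paley-type graph Γ_N has order N·φ(N)/2ⁿ = ∏_{i=1}^{n} p_i(p_i − 1)/2. -/
open Finset

/-! ### Paley graphs of prime order -/

section prime
variable {p : ℕ} [Fact p.Prime]

theorem chi_neg (h4 : p % 4 = 1) (x : ZMod p) :
    quadraticChar (ZMod p) (-x) = quadraticChar (ZMod p) x := by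
  have h : quadraticChar (ZMod p) (-1) = 1 := by
    rw [quadraticChar_one_iff_isSquare (neg_ne_zero.2 one_ne_zero), FiniteField.isSquare_neg_one_iff,
      ZMod.card]
    omega
  rw [← neg_one_mul, map_mul, h, one_mul]

theorem ringChar_ne (h4 : p % 4 = 1) : ringChar (ZMod p) ≠ 2 := by
  rw [ZMod.ringChar_zmod_n]; omega

/-- A substitution `u = d * x` turns the sum into the Jacobi sum `J(χ, χ)`. -/
theorem sum_chi_chi (h4 : p % 4 = 1) {d : ZMod p} (hd : d ≠ 0) :
    ∑ u : ZMod p, quadraticChar (ZMod p) u * quadraticChar (ZMod p) (u - d) = -1 := by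
  have h := jacobiSum_nontrivial_inv (quadraticChar_ne_one (ringChar_ne h4))
  rw [(quadraticChar_isQuadratic (ZMod p)).inv, chi_neg h4, map_one, jacobiSum] at h
  rw [← h, ← Equiv.sum_comp (Equiv.mulLeft₀ d hd)]
  refine sum_congr rfl fun x _ => ?_
  have h1 : d * x - d = -(d * (1 - x)) := by ring
  rw [Equiv.mulLeft₀_apply, h1, chi_neg h4, map_mul, map_mul]
  linear_combination (quadraticChar (ZMod p) x * quadraticChar (ZMod p) (1 - x)) *
    quadraticChar_sq_one hd

/-- The number of common neighbours of two distinct vertices in the Paley graph on `ZMod p`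
(`ε = 1`) or in its complement (`ε = -1`), obtained by summing
`(1 + ε χ(u - a)) (1 + ε χ(u - b))` over `u` and correcting the terms `u = a` and `u = b`. -/
theorem card_common (h4 : p % 4 = 1) {ε : ℤ} (hε : ε = 1 ∨ ε = -1) {a b : ZMod p} (hd : a ≠ b) :
    4 * (#{u : ZMod p | quadraticChar (ZMod p) (u - a) = ε ∧ quadraticChar (ZMod p) (u - b) = ε} : ℤ)
      = p - 3 - 2 * ε * quadraticChar (ZMod p) (a - b) := by
  set χ := quadraticChar (ZMod p) with hχ
  have hd' : b - a ≠ 0 := sub_ne_zero.2 hd.symm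
  have s0 : ∀ c, ∑ u : ZMod p, χ (u - c) = 0 := fun c => by
    rw [← quadraticChar_sum_zero (ringChar_ne (p := p) h4)]
    exact Equiv.sum_comp (Equiv.subRight c) _
  have s1 : ∑ u : ZMod p, χ (u - a) * χ (u - b) = -1 := by
    rw [← sum_chi_chi h4 hd', ← Equiv.sum_comp (Equiv.addRight a)]
    refine sum_congr rfl fun x _ => ?_
    rw [Equiv.coe_addRight, add_sub_cancel_right, show x + a - b = x - (b - a) by ring]
  have key : ∀ u : ZMod p, (if χ (u - a) = ε ∧ χ (u - b) = ε then (4 : ℤ) else 0) =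
      (1 + ε * χ (u - a) + ε * χ (u - b) + χ (u - a) * χ (u - b))
       - (if u = a then 1 + ε * χ (a - b) else 0) - (if u = b then 1 + ε * χ (a - b) else 0) := by
    intro u
    by_cases ha : u = a
    · subst ha
      have : χ 0 = 0 := quadraticChar_zero
      rcases hε with rfl | rfl <;> simp [this, hd]
    by_cases hb : u = b
    · subst hb
      have : χ 0 = 0 := quadraticChar_zero
      have h2 : χ (u - a) = χ (a - u) := by rw [← chi_neg h4, neg_sub]
      rcases hε with rfl | rfl <;> simp [this, ha, h2]
    · rcases quadraticChar_dichotomy (sub_ne_zero.2 ha) with h | h <;>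
      rcases quadraticChar_dichotomy (sub_ne_zero.2 hb) with h' | h' <;>
      rcases hε with rfl | rfl <;> rw [← hχ] at h h' <;> simp [h, h', ha, hb]
  have h := sum_congr rfl fun u (_ : u ∈ (univ : Finset (ZMod p))) => key u
  rw [← sum_filter, sum_const] at h
  simp only [sum_sub_distrib, sum_add_distrib, ← mul_sum, s0, s1, sum_ite_eq', mem_univ, if_true,
    sum_const, card_univ, ZMod.card, nsmul_eq_mul] at h
  linear_combination h

theorem card_degree (h4 : p % 4 = 1) (a : ZMod p) :
    2 * (#{u : ZMod p | quadraticChar (ZMod p) (u - a) = 1} : ℤ) = p - 1 := by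
  set χ := quadraticChar (ZMod p) with hχ
  have s0 : ∀ c, ∑ u : ZMod p, χ (u - c) = 0 := fun c => by
    rw [← quadraticChar_sum_zero (ringChar_ne (p := p) h4)]
    exact Equiv.sum_comp (Equiv.subRight c) _
  have key : ∀ u : ZMod p, (if χ (u - a) = 1 then (2 : ℤ) else 0) =
      1 + χ (u - a) - (if u = a then 1 else 0) := by
    intro u
    by_cases ha : u = a
    · have : χ 0 = 0 := quadraticChar_zero
      simp [ha, this]
    · rcases quadraticChar_dichotomy (sub_ne_zero.2 ha) with h | h <;>
      rw [← hχ] at h <;> simp [h, ha]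
  have h := sum_congr rfl fun u (_ : u ∈ (univ : Finset (ZMod p))) => key u
  rw [← sum_filter, sum_const] at h
  simp only [sum_sub_distrib, sum_add_distrib, s0, sum_ite_eq', mem_univ, if_true,
    sum_const, card_univ, ZMod.card, nsmul_eq_mul] at h
  linear_combination h

/-- With `m = (p - 1) / 2`, every monomial `y ^ k`, `k ≤ m`, is up to a constant a linear combination
of the powers `(y - c) ^ m`: the weight `c ^ (m + k)` isolates the `k`-th term of the binomial
expansion, since `∑ c, c ^ e` vanishes unless `p - 1 ∣ e` and `0 < e`. -/
theorem sum_pow_mul_sub_pow (m k : ℕ) (hm : 0 < m) (hp : p = 2 * m + 1) (hk : k ≤ m) (y : ZMod p) :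
    ∑ c : ZMod p, c ^ (m + k) * (y - c) ^ m = - ((-1) ^ (m - k) * m.choose k) * y ^ k := by
  have hpow : ∀ c : ZMod p, c ^ p = c := ZMod.pow_card
  have hs : ∀ j ≤ m, ∑ c : ZMod p, c ^ (m + k + (m - j)) = if j = k then -1 else 0 := by
    intro j hj
    split_ifs with h
    · subst h
      have : m + j + (m - j) = p - 1 := by omega
      simp_rw [this]
      have h1 : ∀ c : ZMod p, c ^ (p - 1) = 1 - if c = 0 then 1 else 0 := by
        intro c
        by_cases hc : c = 0
        · subst hc; simp; omega
        · simp [hc, ZMod.pow_card_sub_one_eq_one hc]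
      simp [h1]
    · rcases lt_or_gt_of_ne h with h | h
      · have : ∀ c : ZMod p, c ^ (m + k + (m - j)) = c ^ (k - j) := by
          intro c
          have e1 : m + k + (m - j) = p + (k - j - 1) := by omega
          rw [e1, pow_add, hpow, ← pow_succ']
          congr 1; omega
        simp_rw [this]
        apply FiniteField.sum_pow_lt_card_sub_one
        rw [ZMod.card]; omega
      · apply FiniteField.sum_pow_lt_card_sub_one
        rw [ZMod.card]; omega
  have h1 : ∀ c : ZMod p, c ^ (m + k) * (y - c) ^ m =
      ∑ j ∈ range (m + 1), (y ^ j * (-1) ^ (m - j) * m.choose j) * c ^ (m + k + (m - j)) := by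
    intro c
    rw [sub_eq_add_neg, add_pow, mul_sum]
    refine sum_congr rfl fun j _ => ?_
    rw [neg_pow c, pow_add c (m + k)]; ring
  simp_rw [h1]
  rw [sum_comm]
  simp_rw [← mul_sum]
  rw [sum_congr rfl fun j hj => by rw [hs j (by simpa [Nat.lt_succ_iff] using hj)]]
  simp only [mul_ite, mul_zero]
  rw [sum_ite_eq', if_pos (by simp; omega)]
  ring

open Polynomial in
/-- Carlitz's theorem for prime fields: a map preserving the quadratic character of differences is
affine, with a square as its linear coefficient. -/
theorem carlitz (h4 : p % 4 = 1) (f : ZMod p → ZMod p)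
    (hf : ∀ s t, quadraticChar (ZMod p) (f s - f t) = quadraticChar (ZMod p) (s - t)) :
    ∃ α β, quadraticChar (ZMod p) α = 1 ∧ ∀ t, f t = α * t + β := by
  have hinj : Function.Injective f := by
    intro s t h
    have := hf s t
    rw [h, sub_self, quadraticChar_zero, eq_comm, quadraticChar_eq_zero_iff, sub_eq_zero] at this
    exact this
  have hbij : Function.Bijective f := Finite.injective_iff_bijective.1 hinj
  obtain ⟨m, hm⟩ : ∃ m, p = 2 * m + 1 := ⟨p / 2, by omega⟩
  have hp2 := (Fact.out : p.Prime).two_le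
  have hm2 : 2 ≤ m := by omega
  have hpow : ∀ s t, (f s - f t) ^ m = (s - t) ^ m := by
    intro s t
    have h := congrArg (Int.cast : ℤ → ZMod p) (hf s t)
    rw [quadraticChar_eq_pow_of_char_ne_two' (ringChar_ne h4),
      quadraticChar_eq_pow_of_char_ne_two' (ringChar_ne h4), ZMod.card] at h
    rwa [show p / 2 = m by omega] at h
  -- `f x ^ k` is a combination of the `(f x - f a) ^ m = (x - a) ^ m`, hence has degree at most `m`.
  have hpoly : ∀ k ≤ m, ∃ Q : (ZMod p)[X], Q.natDegree ≤ m ∧ ∀ x, Q.eval x = f x ^ k := by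
    intro k hk
    set C0 : ZMod p := - ((-1) ^ (m - k) * m.choose k) with hC0
    have hC : C0 ≠ 0 := by
      rw [hC0, neg_ne_zero]
      refine mul_ne_zero (pow_ne_zero _ (neg_ne_zero.2 one_ne_zero)) ?_
      rw [Ne, ZMod.natCast_eq_zero_iff]
      intro hd
      have := (Fact.out : p.Prime).dvd_factorial.1
        (hd.trans (Dvd.intro _ (by rw [← mul_assoc]; exact Nat.choose_mul_factorial_mul_factorial hk)))
      omega
    refine ⟨C C0⁻¹ * ∑ a : ZMod p, C (f a ^ (m + k)) * (X - C a) ^ m, ?_, ?_⟩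
    · refine (natDegree_C_mul_le _ _).trans (natDegree_sum_le_of_forall_le _ _ fun a _ => ?_)
      refine (natDegree_C_mul_le _ _).trans (natDegree_pow_le.trans ?_)
      rw [natDegree_X_sub_C, mul_one]
    · intro x
      rw [eval_C_mul, eval_finsetSum]
      simp only [eval_mul, eval_C, eval_pow, eval_sub, eval_X]
      rw [sum_congr rfl fun a _ => by rw [← hpow x a]]
      rw [hbij.sum_comp (fun c => c ^ (m + k) * (f x - c) ^ m),
        sum_pow_mul_sub_pow m k (by omega) hm hk, ← hC0, inv_mul_cancel_left₀ hC]
  obtain ⟨P, hPd, hP⟩ := hpoly 1 (by omega)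
  have hdeg : P.natDegree ≤ 1 := by
    by_contra! hlt
    -- The power `k = m / d + 1` of a polynomial of degree `d ≥ 2` has degree `k * d` with
    -- `m < k * d ≤ 2 * m < p`, so it cannot agree on `ZMod p` with one of degree at most `m`.
    set d := P.natDegree with hd
    have h1 : m / d + 1 ≤ m := by
      have : m / d ≤ m / 2 := Nat.div_le_div_left hlt (by norm_num)
      omega
    obtain ⟨Q, hQd, hQ⟩ := hpoly (m / d + 1) h1
    have h2 : (P ^ (m / d + 1)).natDegree = (m / d + 1) * d := natDegree_pow _ _
    have h3 : m < (m / d + 1) * d := by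
      rw [mul_comm]; exact Nat.lt_mul_div_succ m (by omega)
    have h4 : (m / d + 1) * d ≤ 2 * m := by
      have := Nat.div_mul_le_self m d
      rw [add_mul]; omega
    have h5 : P ^ (m / d + 1) = Q := by
      apply eq_of_natDegree_lt_card_of_eval_eq (f := (id : ZMod p → ZMod p)) _ _ Function.injective_id
      · intro x; simp [hQ, hP]
      · rw [ZMod.card, h2]; apply max_lt <;> omega
    rw [h5] at h2
    omega
  obtain ⟨α, β, rfl⟩ := exists_eq_X_add_C_of_natDegree_le_one hdeg
  have hlin : ∀ t, f t = α * t + β := fun t => by simpa using (hP t).symm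
  refine ⟨α, β, ?_, hlin⟩
  have := hf 1 0
  simpa [hlin] using this

end prime

/-! ### Common neighbours in the product -/

section product
variable {ι : Type*} [Fintype ι] [DecidableEq ι] {p : ι → ℕ} [∀ i, Fact (p i).Prime]

/-- Adjacency in the direct product of the Paley graphs on the `ZMod (p i)`. -/
def PAdj (a b : ∀ i, ZMod (p i)) : Prop := ∀ i, quadraticChar (ZMod (p i)) (a i - b i) = 1

/-- `a` and `b` differ in the coordinate `i` only, and there by a nonresidue. The union of these
relations over `i` is adjacency in the Cartesian product of the complements of the Paley graphs. -/
def DirAdj (i : ι) (a b : ∀ i, ZMod (p i)) : Prop :=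
  quadraticChar (ZMod (p i)) (a i - b i) = -1 ∧ ∀ j, j ≠ i → a j = b j

open Classical in
/-- The number of common neighbours for the relation `PAdj`. -/
noncomputable def cn (a b : ∀ i, ZMod (p i)) : ℕ := #{c | PAdj c a ∧ PAdj c b}

open Classical in
/-- The number of common neighbours for the relation `∃ i, DirAdj i`. -/
noncomputable def hn (a b : ∀ i, ZMod (p i)) : ℕ :=
  #{c | (∃ i, DirAdj i c a) ∧ (∃ i, DirAdj i c b)}

/-- The number of common neighbours in the Paley graph on `ZMod q`. -/
def cnp (q : ℕ) [Fact q.Prime] (a b : ZMod q) : ℕ :=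
  #{u : ZMod q | quadraticChar (ZMod q) (u - a) = 1 ∧ quadraticChar (ZMod q) (u - b) = 1}

theorem cn_eq (a b : ∀ i, ZMod (p i)) : cn a b = ∏ i, cnp (p i) (a i) (b i) := by
  unfold cn cnp
  rw [← Fintype.card_piFinset]
  congr 1
  ext c
  simp [PAdj, forall_and]

theorem cnp_self {q : ℕ} [Fact q.Prime] (h4 : q % 4 = 1) (a : ZMod q) :
    2 * (cnp q a a : ℤ) = q - 1 := by
  rw [← card_degree h4 a]; simp [cnp]

theorem cnp_ne {q : ℕ} [Fact q.Prime] (h4 : q % 4 = 1) {a b : ZMod q} (h : a ≠ b) :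
    4 * (cnp q a b : ℤ) = q - 3 - 2 * quadraticChar (ZMod q) (a - b) := by
  have := card_common h4 (Or.inl rfl) h
  rw [mul_one] at this
  exact this

theorem cnp_self_pos {q : ℕ} [Fact q.Prime] (h4 : q % 4 = 1) (a : ZMod q) : 0 < cnp q a a := by
  have := cnp_self h4 a
  have := (Fact.out : q.Prime).two_le
  omega

theorem cnp_half_le {q : ℕ} [Fact q.Prime] (h4 : q % 4 = 1) {a b : ZMod q} (h : a ≠ b) :
    2 * cnp q a b ≤ cnp q a a := by
  have h1 := cnp_self h4 a
  have h2 := cnp_ne h4 h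
  rcases quadraticChar_dichotomy (sub_ne_zero.2 h) with h3 | h3 <;> rw [h3] at h2 <;> omega

theorem cnp_half_iff {q : ℕ} [Fact q.Prime] (h4 : q % 4 = 1) {a b : ZMod q} (h : a ≠ b) :
    2 * cnp q a b = cnp q a a ↔ quadraticChar (ZMod q) (a - b) = -1 := by
  have h1 := cnp_self h4 a
  have h2 := cnp_ne h4 h
  rcases quadraticChar_dichotomy (sub_ne_zero.2 h) with h3 | h3 <;> rw [h3] at h2 ⊢ <;>
  constructor <;> intro h5 <;> omega

theorem cnp_le {q : ℕ} [Fact q.Prime] (a b : ZMod q) : cnp q a b ≤ cnp q a a := by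
  unfold cnp
  apply card_le_card
  intro u
  simp +contextual

theorem ne_of_chi {q : ℕ} [Fact q.Prime] {a b : ZMod q}
    (h : quadraticChar (ZMod q) (a - b) = -1) : a ≠ b := by
  rintro rfl
  rw [sub_self, quadraticChar_zero] at h
  omega

/-- The relation `∃ i, DirAdj i` is recovered from `PAdj` by counting: each coordinate in which `a`
and `b` differ multiplies the number of common neighbours by a factor at most `1 / 2`, with equality
exactly when the difference there is a nonresidue. -/
theorem half_iff (h4 : ∀ i, p i % 4 = 1) (a b : ∀ i, ZMod (p i)) :
    (∃ i, DirAdj i a b) ↔ 2 * cn a b = cn a a := by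
  rw [cn_eq, cn_eq]
  have hpos : 0 < ∏ i, cnp (p i) (a i) (a i) := prod_pos fun i _ => cnp_self_pos (h4 i) _
  have heq : ∀ i, (∀ j, j ≠ i → a j = b j) → ∏ j ∈ univ.erase i, cnp (p j) (a j) (b j) =
      ∏ j ∈ univ.erase i, cnp (p j) (a j) (a j) := fun i h =>
    prod_congr rfl fun j hj => by rw [h j (ne_of_mem_erase hj)]
  constructor
  · rintro ⟨i, h1, h2⟩
    rw [← mul_prod_erase _ _ (mem_univ i), ← mul_prod_erase univ (fun i => cnp (p i) (a i) (a i))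
      (mem_univ i), heq i h2, ← mul_assoc, (cnp_half_iff (h4 i) (ne_of_chi h1)).2 h1]
  · intro h
    have hab : a ≠ b := by rintro rfl; omega
    obtain ⟨i, hi⟩ := Function.ne_iff.1 hab
    have hrest : ∀ j, j ≠ i → a j = b j := by
      intro j hj
      by_contra hne
      rw [← mul_prod_erase _ _ (mem_univ i), ← mul_prod_erase univ (fun i => cnp (p i) (a i) (a i))
        (mem_univ i), ← mul_prod_erase _ _ (mem_erase.2 ⟨hj, mem_univ j⟩),
        ← mul_prod_erase (univ.erase i) (fun i => cnp (p i) (a i) (a i))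
          (mem_erase.2 ⟨hj, mem_univ j⟩)] at h
      rw [← mul_prod_erase univ (fun i => cnp (p i) (a i) (a i)) (mem_univ i),
        ← mul_prod_erase (univ.erase i) (fun i => cnp (p i) (a i) (a i))
          (mem_erase.2 ⟨hj, mem_univ j⟩)] at hpos
      have h1 := Nat.mul_le_mul (cnp_half_le (h4 i) hi) (Nat.mul_le_mul (cnp_half_le (h4 j) hne)
        (prod_le_prod' fun k (_ : k ∈ (univ.erase i).erase j) => cnp_le (a k) (b k)))
      nlinarith
    refine ⟨i, ?_, hrest⟩
    rw [← cnp_half_iff (h4 i) hi]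
    rw [← mul_prod_erase _ _ (mem_univ i), ← mul_prod_erase univ (fun i => cnp (p i) (a i) (a i))
      (mem_univ i), heq i hrest, ← mul_assoc] at h
    exact Nat.eq_of_mul_eq_mul_right (prod_pos fun j _ => cnp_self_pos (h4 j) _) h

/-- A common neighbour of `a` and `b` differs from both in the direction `i` only, so their number
determines `p i`. -/
theorem hn_eq (h4 : ∀ i, p i % 4 = 1) {i : ι} {a b : ∀ i, ZMod (p i)} (h : DirAdj i a b) :
    4 * (hn a b : ℤ) = p i - 5 := by
  classical
  obtain ⟨h1, h2⟩ := h
  have hne := ne_of_chi h1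
  have hc := card_common (h4 i) (Or.inr rfl) hne
  have : hn a b = #{u : ZMod (p i) | quadraticChar (ZMod (p i)) (u - a i) = -1 ∧
      quadraticChar (ZMod (p i)) (u - b i) = -1} := by
    unfold hn
    symm
    apply card_bij (fun u _ => Function.update a i u)
    · intro u hu
      simp only [mem_filter, mem_univ, true_and] at hu ⊢
      refine ⟨⟨i, ?_, ?_⟩, ⟨i, ?_, ?_⟩⟩
      · simpa using hu.1
      · intro j hj; simp [hj]
      · simpa using hu.2
      · intro j hj; simp [hj, h2 j hj]
    · intro u _ v _ huv
      exact Function.update_injective a i huv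
    · intro c hc
      simp only [mem_filter, mem_univ, true_and] at hc
      obtain ⟨⟨k, hk1, hk2⟩, ⟨l, hl1, hl2⟩⟩ := hc
      have hki : k = i := by
        by_contra hki
        have e1 : c i = a i := hk2 i (Ne.symm hki)
        have hli : l = i := by
          by_contra hli
          exact hne (e1.symm.trans (hl2 i (Ne.symm hli)))
        subst hli
        exact ne_of_chi hk1 ((hl2 k hki).trans (h2 k hki).symm)
      subst hki
      have hlk : l = k := by
        by_contra hlk
        exact ne_of_chi hl1 ((hk2 l hlk).trans (h2 l hlk))
      subst hlk
      refine ⟨c l, mem_filter.2 ⟨mem_univ _, hk1, hl1⟩, ?_⟩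
      ext j
      by_cases hj : j = l
      · subst hj; simp
      · simp [hj, hk2 j hj]
  rw [this, hc, h1]; ring

/-! ### Automorphisms act coordinatewise -/

variable (f : Equiv.Perm (∀ i, ZMod (p i)))

theorem cn_map (hf : ∀ a b, PAdj (f a) (f b) ↔ PAdj a b) (a b) : cn (f a) (f b) = cn a b := by
  classical
  unfold cn
  symm
  apply card_equiv f
  intro c
  simp [hf]

theorem exists_dirAdj_map (h4 : ∀ i, p i % 4 = 1) (hf : ∀ a b, PAdj (f a) (f b) ↔ PAdj a b) (a b) :
    (∃ i, DirAdj i (f a) (f b)) ↔ ∃ i, DirAdj i a b := by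
  rw [half_iff h4, half_iff h4, cn_map f hf, cn_map f hf]

theorem hn_map (h4 : ∀ i, p i % 4 = 1) (hf : ∀ a b, PAdj (f a) (f b) ↔ PAdj a b) (a b) :
    hn (f a) (f b) = hn a b := by
  classical
  unfold hn
  symm
  apply card_equiv f
  intro c
  simp only [mem_filter, mem_univ, true_and, exists_dirAdj_map f h4 hf]

/-- As the `p i` are distinct, `hn_eq` shows that `f` preserves the direction of an edge. -/
theorem dirAdj_map (h4 : ∀ i, p i % 4 = 1) (hinj : Function.Injective p)
    (hf : ∀ a b, PAdj (f a) (f b) ↔ PAdj a b) {i : ι} {a b} (h : DirAdj i a b) :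
    DirAdj i (f a) (f b) := by
  obtain ⟨k, hk⟩ := (exists_dirAdj_map f h4 hf a b).2 ⟨i, h⟩
  have h1 := hn_eq h4 h
  have h2 := hn_eq h4 hk
  rw [hn_map f h4 hf] at h2
  have : k = i := hinj (by omega)
  exact this ▸ hk

/-- Moving the coordinate `j` in steps of a fixed nonresidue `ν` reaches every residue class, and no
step changes the coordinates of the image other than `j`. -/
theorem map_update (h4 : ∀ i, p i % 4 = 1) (hinj : Function.Injective p)
    (hf : ∀ a b, PAdj (f a) (f b) ↔ PAdj a b) {i j : ι} (hij : i ≠ j) (a : ∀ i, ZMod (p i))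
    (t : ZMod (p j)) : f (Function.update a j t) i = f a i := by
  obtain ⟨ν, hν⟩ := quadraticChar_exists_neg_one (ringChar_ne (h4 j))
  have hν0 : ν ≠ 0 := by rintro rfl; rw [quadraticChar_zero] at hν; omega
  have step : ∀ k : ℕ, f (Function.update a j (a j + k * ν)) i = f a i := by
    intro k
    induction k with
    | zero => simp
    | succ k ih =>
      rw [← ih]
      have h : DirAdj j (Function.update a j (a j + (k + 1 : ℕ) * ν))
          (Function.update a j (a j + k * ν)) := by
        refine ⟨?_, fun l hl => by simp [hl]⟩
        rw [Function.update_self, Function.update_self, ← hν]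
        congr 1; push_cast; ring
      exact (dirAdj_map f h4 hinj hf h).2 i hij
  have := step ((t - a j) / ν).val
  rwa [ZMod.natCast_zmod_val, div_mul_cancel₀ _ hν0, add_sub_cancel] at this

/-- The `i`-th coordinate of `f a` depends on `a i` only. -/
theorem map_apply_congr (h4 : ∀ i, p i % 4 = 1) (hinj : Function.Injective p)
    (hf : ∀ a b, PAdj (f a) (f b) ↔ PAdj a b) {i : ι} {a b : ∀ i, ZMod (p i)} (hab : a i = b i) :
    f a i = f b i := by
  have : ∀ s : Finset ι, f (s.piecewise b a) i = f a i := by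
    intro s
    induction s using Finset.induction_on with
    | empty => simp
    | insert j s _ ih =>
      rw [piecewise_insert]
      by_cases hij : i = j
      · subst hij
        have h : s.piecewise b a i = b i := by by_cases his : i ∈ s <;> simp [his, hab]
        rw [← h, Function.update_eq_self, ih]
      · rw [map_update f h4 hinj hf hij, ih]
  simpa using (this univ).symm

/-- Every automorphism of the product acts on each coordinate by an affine map with square slope. -/
theorem exists_affine (h4 : ∀ i, p i % 4 = 1) (hinj : Function.Injective p)
    (hf : ∀ a b, PAdj (f a) (f b) ↔ PAdj a b) (i : ι) :
    ∃ α β, quadraticChar (ZMod (p i)) α = 1 ∧ ∀ a, f a i = α * a i + β := by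
  have hf' : ∀ a b, PAdj (f.symm a) (f.symm b) ↔ PAdj a b := fun a b => by
    rw [← hf]; simp
  have hchi : ∀ s t, quadraticChar (ZMod (p i))
      (f (Function.update 0 i s) i - f (Function.update 0 i t) i) =
        quadraticChar (ZMod (p i)) (s - t) := by
    intro s t
    have hoff : ∀ j, j ≠ i → f (Function.update 0 i s) j = f (Function.update 0 i t) j :=
      fun j hj => map_apply_congr f h4 hinj hf (by simp [hj])
    by_cases hst : s = t
    · simp [hst]
    have hne : f (Function.update 0 i s) i ≠ f (Function.update 0 i t) i := by
      intro he
      refine hst (Function.update_injective (0 : ∀ i, ZMod (p i)) i (f.injective (funext fun j => ?_)))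
      by_cases hj : j = i
      · rw [hj, he]
      · exact hoff j hj
    have hiff : quadraticChar (ZMod (p i))
        (f (Function.update 0 i s) i - f (Function.update 0 i t) i) = -1 ↔
          quadraticChar (ZMod (p i)) (s - t) = -1 := by
      constructor
      · intro h
        have := dirAdj_map f.symm h4 hinj hf' (⟨h, hoff⟩ : DirAdj i _ _)
        simpa using this.1
      · intro h
        have h' : DirAdj i (Function.update 0 i s) (Function.update (0 : ∀ i, ZMod (p i)) i t) :=
          ⟨by simpa using h, fun j hj => by simp [hj]⟩
        exact (dirAdj_map f h4 hinj hf h').1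
    rcases quadraticChar_dichotomy (sub_ne_zero.2 hst) with h | h <;>
    rcases quadraticChar_dichotomy (sub_ne_zero.2 hne) with h' | h' <;>
    rw [h, h'] at hiff ⊢ <;> omega
  obtain ⟨α, β, hα, h⟩ := carlitz (h4 i) (fun t => f (Function.update 0 i t) i) hchi
  refine ⟨α, β, hα, fun a => ?_⟩
  rw [← h]
  exact map_apply_congr f h4 hinj hf (by simp)

/-! ### The automorphism group -/

/-- The direct product of the Paley graphs on the `ZMod (p i)`. -/
def prodGraph (h4 : ∀ i, p i % 4 = 1) [Nonempty ι] : SimpleGraph (∀ i, ZMod (p i)) where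
  Adj := PAdj
  symm := ⟨fun a b h i => by rw [← neg_sub, chi_neg (h4 i)]; exact h i⟩
  loopless := ⟨fun a h => by
    have := h (Classical.arbitrary ι)
    rw [sub_self, quadraticChar_zero] at this
    omega⟩

theorem chi_ne_zero {q : ℕ} [Fact q.Prime] {α : ZMod q} (h : quadraticChar (ZMod q) α = 1) :
    α ≠ 0 := by
  rintro rfl
  rw [quadraticChar_zero] at h
  omega

/-- The coordinatewise affine automorphism `a i ↦ α i * a i + β i`, with every `α i` a nonzero square. -/
def affineAut (h4 : ∀ i, p i % 4 = 1) [Nonempty ι]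
    (x : ∀ i, {α : ZMod (p i) // quadraticChar (ZMod (p i)) α = 1} × ZMod (p i)) :
    prodGraph h4 ≃g prodGraph h4 where
  toEquiv := Equiv.piCongrRight fun i =>
    (Equiv.mulLeft₀ (x i).1.1 (chi_ne_zero (x i).1.2)).trans (Equiv.addRight (x i).2)
  map_rel_iff' := by
    intro a b
    refine forall_congr' fun i => ?_
    simp [← mul_sub, (x i).1.2, -quadraticChar_apply]

theorem card_aut_prodGraph (h4 : ∀ i, p i % 4 = 1) (hinj : Function.Injective p) [Nonempty ι] :
    Nat.card (prodGraph h4 ≃g prodGraph h4) = ∏ i, (p i * (p i - 1) / 2) := by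
  have hb : Function.Bijective (affineAut h4) := by
    constructor
    · intro x y hxy
      have hv : ∀ (a : ∀ i, ZMod (p i)) i, (x i).1.1 * a i + (x i).2 = (y i).1.1 * a i + (y i).2 :=
        fun a i => congrFun (DFunLike.congr_fun hxy a) i
      funext i
      have h0 := hv 0 i
      have h1 := hv 1 i
      simp only [Pi.zero_apply, mul_zero, zero_add, Pi.one_apply, mul_one] at h0 h1
      rw [h0] at h1
      exact Prod.ext (Subtype.ext (add_right_cancel h1)) h0
    · intro g
      choose α β hα h using exists_affine g.toEquiv h4 hinj (fun a b => g.map_rel_iff)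
      refine ⟨fun i => (⟨α i, hα i⟩, β i), ?_⟩
      ext a i
      exact (h i a).symm
  rw [← Nat.card_eq_of_bijective _ hb, Nat.card_pi]
  refine prod_congr rfl fun i _ => ?_
  have h := card_degree (h4 i) 0
  simp only [sub_zero] at h
  rw [Nat.card_prod, Nat.card_zmod, Nat.card_eq_fintype_card, Fintype.card_subtype]
  have h2 : p i - 1 = 2 * #{u : ZMod (p i) | quadraticChar (ZMod (p i)) u = 1} := by omega
  rw [h2, ← mul_assoc, mul_comm (p i) 2, mul_assoc, Nat.mul_div_cancel_left _ two_pos, mul_comm]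

theorem mem_QRset_iff_s18 (hc : Pairwise (Function.onFun Nat.Coprime p)) (u : ZMod (∏ i, p i)) :
    u ∈ QRset (∏ i, p i) ↔ ∀ i, quadraticChar (ZMod (p i)) (ZMod.prodEquivPi p hc u i) = 1 := by
  constructor
  · rintro ⟨x, hx, rfl⟩ i
    rw [map_pow, Pi.pow_apply]
    apply quadraticChar_sq_one'
    exact (Pi.isUnit_iff.1 (hx.map (ZMod.prodEquivPi p hc)) i).ne_zero
  · intro h
    have h' : ∀ i, ∃ y, ZMod.prodEquivPi p hc u i = y * y := fun i =>
      (quadraticChar_one_iff_isSquare (chi_ne_zero (h i))).1 (h i)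
    choose y hy using h'
    refine ⟨(ZMod.prodEquivPi p hc).symm y, ?_, ?_⟩
    · refine IsUnit.map _ (Pi.isUnit_iff.2 fun i => IsUnit.mk0 _ fun h0 => ?_)
      exact chi_ne_zero (h i) (by rw [hy, h0, mul_zero])
    · apply (ZMod.prodEquivPi p hc).injective
      rw [map_pow, RingEquiv.apply_symm_apply]
      ext i
      rw [Pi.pow_apply, hy, sq]

/-- The Chinese remainder theorem as a graph isomorphism. -/
noncomputable def paleyIso (h4 : ∀ i, p i % 4 = 1) [Nonempty ι] (hc : Pairwise (Function.onFun Nat.Coprime p)) :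
    paleyType (∏ i, p i) ≃g prodGraph h4 where
  toEquiv := (ZMod.prodEquivPi p hc).toEquiv
  map_rel_iff' := by
    intro a b
    have key : ∀ a b, (prodGraph h4).Adj (ZMod.prodEquivPi p hc a) (ZMod.prodEquivPi p hc b) ↔
        a - b ∈ QRset (∏ i, p i) := fun a b => by
      rw [mem_QRset_iff_s18 hc, map_sub]; rfl
    change (prodGraph h4).Adj (ZMod.prodEquivPi p hc a) (ZMod.prodEquivPi p hc b) ↔ _
    rw [paleyType, SimpleGraph.fromRel_adj, ← key, ← key,
      (prodGraph h4).adj_comm (ZMod.prodEquivPi p hc b), or_self]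
    exact ⟨fun h => ⟨fun hab => h.ne (congrArg _ hab), h⟩, fun h => h.2⟩

end product

theorem stmt_18 (n : ℕ) (hn : 0 < n) (p : Fin n → ℕ) (hp : ∀ i, (p i).Prime)
    (h4 : ∀ i, p i % 4 = 1) (hmono : StrictMono p)
    (N : ℕ) (hN : N = ∏ i, p i) :
    Nat.card (paleyType N ≃g paleyType N) = N * N.totient / 2 ^ n ∧
      N * N.totient / 2 ^ n = ∏ i, (p i * (p i - 1) / 2) := by
  subst hN
  have : ∀ i, Fact (p i).Prime := fun i => ⟨hp i⟩
  have : Nonempty (Fin n) := ⟨⟨0, hn⟩⟩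
  have hc : Pairwise (Function.onFun Nat.Coprime p) := fun i j hij =>
    (Nat.coprime_primes (hp i) (hp j)).2 (hmono.injective.ne hij)
  have : NeZero (∏ i, p i) := ⟨prod_ne_zero_iff.2 fun i _ => (hp i).ne_zero⟩
  have htot : (∏ i, p i).totient = ∏ i, (p i - 1) := by
    rw [← ZMod.card_units_eq_totient, ← Nat.card_eq_fintype_card,
      Nat.card_congr ((Units.mapEquiv (ZMod.prodEquivPi p hc).toMulEquiv).trans
        MulEquiv.piUnits).toEquiv, Nat.card_pi]
    refine prod_congr rfl fun i _ => ?_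
    rw [Nat.card_eq_fintype_card, ZMod.card_units]
  have hdiv : (∏ i, p i) * (∏ i, p i).totient / 2 ^ n = ∏ i, (p i * (p i - 1) / 2) := by
    apply Nat.div_eq_of_eq_mul_right (by positivity)
    have h2 : (2 : ℕ) ^ n = ∏ _i : Fin n, 2 := by simp
    rw [htot, h2, ← prod_mul_distrib, ← prod_mul_distrib]
    refine prod_congr rfl fun i _ => ?_
    have : 2 ∣ p i - 1 := by have := h4 i; omega
    rw [Nat.mul_div_cancel' (this.mul_left _)]
  refine ⟨?_, hdiv⟩
  rw [hdiv, ← card_aut_prodGraph h4 hmono.injective]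
  exact Nat.card_congr (RelIso.relIsoCongr (paleyIso h4 hc) (paleyIso h4 hc))
end

section
/- Let p_1 < p_2 < ... < p_n be distinct Pythagorean primes with p_1 > 5, and let N = p_1 p_2 ⋯ p_n. Then the Paley-type graph Γ_N is pancyclic: for every integer k with 3 ≤ k ≤ N, the graph Γ_N contains a cycle of length k. -/
/-- An injective closed sequence of consecutively adjacent vertices yields a cycle. -/
theorem exists_cycle_of_seq {V : Type*} (G : SimpleGraph V) (k : ℕ) (hk : 3 ≤ k) (f : ℕ → V)
    (hinj : ∀ i < k, ∀ j < k, f i = f j → i = j)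
    (hadj : ∀ i, i + 1 < k → G.Adj (f i) (f (i + 1)))
    (hclose : G.Adj (f (k - 1)) (f 0)) :
    ∃ a, ∃ c : G.Walk a a, c.IsCycle ∧ c.length = k := by
  rw [← SimpleGraph.cycleGraph_isContained_iff (by omega)]
  have key : ∀ u v : Fin k, (u - v).val = 1 → G.Adj (f v) (f u) := by
    intro u v h
    have hu := u.isLt
    have hv := v.isLt
    rw [Fin.val_sub] at h
    by_cases hvk : v.val + 1 < k
    · have : u.val = v.val + 1 := by
        by_cases hle : v.val ≤ u.val
        · rw [show k - v.val + u.val = (u.val - v.val) + k by omega, Nat.add_mod_right,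
            Nat.mod_eq_of_lt (by omega)] at h
          omega
        · rw [Nat.mod_eq_of_lt (by omega)] at h
          omega
      rw [this]
      exact hadj _ hvk
    · have hv' : v.val = k - 1 := by omega
      have : u.val = 0 := by
        by_contra hne
        by_cases hu1 : u.val = k - 1
        · rw [show k - v.val + u.val = k by omega, Nat.mod_self] at h
          omega
        · rw [Nat.mod_eq_of_lt (by omega)] at h
          omega
      rw [this, hv']
      exact hclose
  refine ⟨⟨⟨fun i => f i, ?_⟩, ?_⟩⟩
  · intro u v h
    rw [SimpleGraph.cycleGraph_adj'] at h
    rcases h with h | h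
    · exact (key u v h).symm
    · exact key v u h
  · intro u v h
    exact Fin.ext (hinj _ u.isLt _ v.isLt h)

theorem paleyType_adj_of_add_sq (N : ℕ) (hN : 1 < N) (x : ℕ) (hx : x.Coprime N) (a b : ZMod N)
    (h : a + (x : ZMod N) ^ 2 = b) : (paleyType N).Adj a b := by
  have : Fact (1 < N) := ⟨hN⟩
  have hu : IsUnit (x : ZMod N) := (ZMod.isUnit_iff_coprime x N).2 hx
  rw [paleyType, SimpleGraph.fromRel_adj]
  refine ⟨?_, Or.inr ⟨x, hu, by rw [← h]; ring⟩⟩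
  intro hab
  rw [← hab] at h
  exact (hu.pow 2).ne_zero (by simpa using h)

/-- A closed sequence of distinct integers in `[0, N)` with steps `±1`, `±4`, closed up by a step
`±1` or by the step from `N - 1` to `0`, yields a cycle. -/
theorem exists_cycle_of_nat_seq (N : ℕ) (hN : 1 < N) (h2 : Nat.Coprime 2 N) (k : ℕ) (hk : 3 ≤ k)
    (f : ℕ → ℕ) (hlt : ∀ i < k, f i < N) (hinj : ∀ i < k, ∀ j < k, f i = f j → i = j)
    (hadj : ∀ i, i + 1 < k → f i + 1 = f (i + 1) ∨ f i + 4 = f (i + 1) ∨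
      f (i + 1) + 1 = f i ∨ f (i + 1) + 4 = f i)
    (hclose : f 0 + 1 = f (k - 1) ∨ f (k - 1) + 1 = f 0 ∨ f (k - 1) + 1 = N ∧ f 0 = 0) :
    ∃ a, ∃ c : (paleyType N).Walk a a, c.IsCycle ∧ c.length = k := by
  have one : ∀ a b : ℕ, a + 1 = b → (paleyType N).Adj (a : ZMod N) (b : ZMod N) := by
    rintro a b rfl
    exact paleyType_adj_of_add_sq N hN 1 (Nat.coprime_one_left N) _ _ (by push_cast; ring)
  have four : ∀ a b : ℕ, a + 4 = b → (paleyType N).Adj (a : ZMod N) (b : ZMod N) := by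
    rintro a b rfl
    exact paleyType_adj_of_add_sq N hN 2 h2 _ _ (by push_cast; ring)
  refine exists_cycle_of_seq _ k hk (fun i => (f i : ZMod N)) ?_ ?_ ?_
  · intro i hi j hj h
    refine hinj i hi j hj ?_
    have := (ZMod.natCast_eq_natCast_iff' _ _ _).1 h
    rwa [Nat.mod_eq_of_lt (hlt i hi), Nat.mod_eq_of_lt (hlt j hj)] at this
  · intro i hi
    rcases hadj i hi with h | h | h | h
    · exact one _ _ h
    · exact four _ _ h
    · exact (one _ _ h).symm
    · exact (four _ _ h).symm
  · rcases hclose with h | h | ⟨h, h0⟩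
    · exact (one _ _ h).symm
    · exact one _ _ h
    · have := one _ _ h
      simpa [h0] using this

theorem exists_cycle_even (N : ℕ) (hN : 1 < N) (h2 : Nat.Coprime 2 N) (m : ℕ) (hm : 1 ≤ m)
    (hmN : 4 * m + 2 ≤ N) :
    ∃ a, ∃ c : (paleyType N).Walk a a, c.IsCycle ∧ c.length = 2 * m + 2 := by
  refine exists_cycle_of_nat_seq N hN h2 _ (by omega)
    (fun i => if i ≤ m then 4 * i else 4 * (2 * m + 1 - i) + 1) ?_ ?_ ?_ ?_
  all_goals grind (splits := 20)

/-- The cycle is shifted by one to stay within the natural numbers. -/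
theorem exists_cycle_odd (N : ℕ) (hN : 1 < N) (h2 : Nat.Coprime 2 N) (m : ℕ) (hmN : 4 * m + 3 ≤ N)
    (h5 : 5 ≤ N) :
    ∃ a, ∃ c : (paleyType N).Walk a a, c.IsCycle ∧ c.length = 2 * m + 5 := by
  refine exists_cycle_of_nat_seq N hN h2 _ (by omega)
    (fun i => if i ≤ m then 4 * i + 1 else if i ≤ 2 * m + 1 then 4 * (2 * m + 1 - i) + 2
      else if i = 2 * m + 2 then 3 else if i = 2 * m + 3 then 4 else 0) ?_ ?_ ?_ ?_
  all_goals grind (splits := 20)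

theorem exists_cycle_omit_zero (N : ℕ) (hN : 1 < N) (h2 : Nat.Coprime 2 N) (j k : ℕ)
    (hj : 4 * j + 1 ≤ N) (hk : 3 ≤ k) (hkN : k + 3 * j = N) :
    ∃ a, ∃ c : (paleyType N).Walk a a, c.IsCycle ∧ c.length = k := by
  refine exists_cycle_of_nat_seq N hN h2 _ hk
    (fun i => if i ≤ j then 4 * i else 3 * j + i) ?_ ?_ ?_ ?_
  all_goals grind (splits := 20)

theorem exists_cycle_omit_one (N : ℕ) (hN : 1 < N) (h2 : Nat.Coprime 2 N) (j k : ℕ)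
    (hj : 4 * j + 7 ≤ N) (hkN : k + 3 * j + 1 = N) :
    ∃ a, ∃ c : (paleyType N).Walk a a, c.IsCycle ∧ c.length = k := by
  refine exists_cycle_of_nat_seq N hN h2 _ (by omega)
    (fun i => if i = 0 then 0 else if i = 1 then 4 else if i = 2 then 5 else if i = 3 then 1
      else if i = 4 then 2 else if i ≤ j + 5 then 6 + 4 * (i - 5) else 3 * j + i + 1) ?_ ?_ ?_ ?_
  all_goals grind (splits := 20)

theorem exists_cycle_omit_two (N : ℕ) (hN : 1 < N) (h2 : Nat.Coprime 2 N) (j k : ℕ)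
    (hj : 4 * j + 7 ≤ N) (hkN : k + 3 * j + 2 = N) :
    ∃ a, ∃ c : (paleyType N).Walk a a, c.IsCycle ∧ c.length = k := by
  refine exists_cycle_of_nat_seq N hN h2 _ (by omega)
    (fun i => if i = 0 then 0 else if i = 1 then 4 else if i = 2 then 3 else if i = 3 then 2
      else if i ≤ j + 4 then 6 + 4 * (i - 4) else 3 * j + i + 2) ?_ ?_ ?_ ?_
  all_goals grind (splits := 20)

/-- The triangle `0, 9, 25`. -/
theorem exists_triangle (N : ℕ) (hN : 1 < N) (h2 : Nat.Coprime 2 N) (h3 : Nat.Coprime 3 N)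
    (h5 : Nat.Coprime 5 N) :
    ∃ a, ∃ c : (paleyType N).Walk a a, c.IsCycle ∧ c.length = 3 := by
  have h09 := paleyType_adj_of_add_sq N hN 3 h3 0 9 (by norm_num)
  have h925 := paleyType_adj_of_add_sq N hN (2 ^ 2) (h2.pow_left 2) 9 25 (by norm_num)
  have h025 := paleyType_adj_of_add_sq N hN 5 h5 0 25 (by norm_num)
  refine exists_cycle_of_seq _ 3 le_rfl (fun i => if i = 0 then 0 else if i = 1 then 9 else 25)
    ?_ ?_ ?_
  · have e1 := h09.ne
    have e2 := h925.ne
    have e3 := h025.ne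
    intro i hi j hj h
    interval_cases i <;> interval_cases j <;> simp_all
  · intro i hi
    have : i = 0 ∨ i = 1 := by omega
    rcases this with rfl | rfl
    · simpa using h09
    · simpa using h925
  · simpa using h025.symm

theorem stmt_19 (n : ℕ) (hn : 0 < n) (p : Fin n → ℕ) (hp : ∀ i, (p i).Prime)
    (h4 : ∀ i, p i % 4 = 1) (hmono : StrictMono p) (h5 : 5 < p ⟨0, hn⟩)
    (N : ℕ) (hN : N = ∏ i, p i) :
    ∀ k : ℕ, 3 ≤ k → k ≤ N →
      ∃ a, ∃ c : (paleyType N).Walk a a, c.IsCycle ∧ c.length = k := by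
  have hgt : ∀ i, 5 < p i := fun i =>
    lt_of_lt_of_le h5 (hmono.monotone (Fin.mk_le_of_le_val (Nat.zero_le _)))
  have hcop : ∀ q : ℕ, q.Prime → q ≤ 5 → q.Coprime N := by
    intro q hq hq5
    rw [hN]
    refine Nat.Coprime.prod_right fun i _ => (Nat.coprime_primes hq (hp i)).2 ?_
    have := hgt i
    omega
  have hmod : N % 4 = 1 := by
    rw [hN, Finset.prod_nat_mod, Finset.prod_congr rfl fun i _ => h4 i]
    simp
  have hpos : 0 < N := by omega
  have h13 : 13 ≤ N := by
    have hle : p ⟨0, hn⟩ ≤ N :=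
      Nat.le_of_dvd hpos (hN ▸ Finset.dvd_prod_of_mem p (Finset.mem_univ _))
    -- The only other candidate below `13` in the class of `1` modulo `4` is `9`.
    have h9 : p ⟨0, hn⟩ ≠ 9 := fun h => absurd (h ▸ hp ⟨0, hn⟩) (by norm_num)
    have := h4 ⟨0, hn⟩
    omega
  have h2 := hcop 2 Nat.prime_two (by norm_num)
  have hN1 : 1 < N := by omega
  intro k hk3 hkN
  by_cases hk : k = 3
  · subst hk
    exact exists_triangle N hN1 h2 (hcop 3 Nat.prime_three (by norm_num))
      (hcop 5 Nat.prime_five le_rfl)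
  by_cases hsmall : 2 * k + 1 ≤ N
  · rcases Nat.even_or_odd' k with ⟨m, rfl | rfl⟩
    · have := exists_cycle_even N hN1 h2 (m - 1) (by omega) (by omega)
      rwa [show 2 * (m - 1) + 2 = 2 * m by omega] at this
    · have := exists_cycle_odd N hN1 h2 (m - 2) (by omega) (by omega)
      rwa [show 2 * (m - 2) + 5 = 2 * m + 1 by omega] at this
  · have hr : (N - k) % 3 = 0 ∨ (N - k) % 3 = 1 ∨ (N - k) % 3 = 2 := by omega
    rcases hr with hr | hr | hr
    · exact exists_cycle_omit_zero N hN1 h2 ((N - k) / 3) k (by omega) hk3 (by omega)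
    · exact exists_cycle_omit_one N hN1 h2 ((N - k) / 3) k (by omega) (by omega)
    · exact exists_cycle_omit_two N hN1 h2 ((N - k) / 3) k (by omega) (by omega)
end
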